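/- arXiv:2503.12477 — 4 statements merged into one kernel-verified Lean document; each statement's English description precedes it below -/
import Mathlib

section
/- Let S² be the unit sphere in three-dimensional Euclidean space and fix a point x₀ ∈ S². The continuous map Φ₀ : S² → Sym2 S² defined by Φ₀(x) = ⟦(x, x₀)⟧ is not homotopic to any constant map. -/
/-- The unit sphere `S²` in three-dimensional Euclidean space. -/
abbrev S2 : Type := Metric.sphere (0 : EuclideanSpace ℝ (Fin 3)) 1

open unitInterval in
/-- Propagation along the interval: a property stable under small steps spreads everywhere. -/
theorem S2aux.propagate {X : Type*} [TopologicalSpace X] [CompactSpace X]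
    (U : Set (X × I × I)) (hU : IsOpen U) (hd : ∀ x t, (x, t, t) ∈ U)
    (P : I → Prop)
    (hstep : ∀ s t, (∀ x, (x, s, t) ∈ U) → (∀ x, (x, t, s) ∈ U) → P s → P t)
    (a b : I) (ha : P a) : P b := by
  have key : ∀ t₀ : I, ∀ᶠ t in nhds t₀, ∀ x : X, (x, t₀, t) ∈ U ∧ (x, t, t₀) ∈ U := by
    intro t₀
    have := (isCompact_univ (X := X)).eventually_forall_of_forall_eventually (x₀ := t₀)
      (P := fun t x => (x, t₀, t) ∈ U ∧ (x, t, t₀) ∈ U) (by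
        intro x _
        have h1 : IsOpen {p : I × X | (p.2, t₀, p.1) ∈ U ∧ (p.2, p.1, t₀) ∈ U} := by
          apply IsOpen.inter
          · exact hU.preimage (f := fun p : I × X => (p.2, t₀, p.1)) (by fun_prop)
          · exact hU.preimage (f := fun p : I × X => (p.2, p.1, t₀)) (by fun_prop)
        exact h1.mem_nhds ⟨hd x t₀, hd x t₀⟩)
    filter_upwards [this] with t ht x using ht x (Set.mem_univ x)
  have hclopen : IsClopen {t | P t} := by
    constructor
    · rw [← isOpen_compl_iff, isOpen_iff_mem_nhds]
      intro t₀ ht₀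
      filter_upwards [key t₀] with t ht hP
      exact ht₀ (hstep t t₀ (fun x => (ht x).2) (fun x => (ht x).1) hP)
    · rw [isOpen_iff_mem_nhds]
      intro t₀ ht₀
      filter_upwards [key t₀] with t ht
      exact hstep t₀ t (fun x => (ht x).1) (fun x => (ht x).2) ht₀
  have := hclopen.eq_univ ⟨a, ha⟩
  have hb : b ∈ {t | P t} := this ▸ Set.mem_univ b
  exact hb

open ComplexConjugate in
theorem S2aux.sum_conj_ne {ι : Type*} [Fintype ι] (v : ι → ℂ) (hv : v ≠ 0) :
    ∑ i, v i * conj (v i) ≠ 0 := by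
  intro h
  apply hv
  have h2 : ∑ i, Complex.normSq (v i) = 0 := by
    have : ((∑ i, Complex.normSq (v i) : ℝ) : ℂ) = 0 := by
      rw [← h]; push_cast
      exact Finset.sum_congr rfl fun i _ => (Complex.mul_conj _).symm
    exact_mod_cast this
  rw [Finset.sum_eq_zero_iff_of_nonneg (fun i _ => Complex.normSq_nonneg _)] at h2
  funext i
  exact Complex.normSq_eq_zero.1 (h2 i (Finset.mem_univ i))

open unitInterval ComplexConjugate in
/-- A homotopy of rank-one families to a constant one gives a nonvanishing section. -/
theorem S2aux.section_exists {X : Type*} [TopologicalSpace X] [CompactSpace X]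
    {ι : Type*} [Fintype ι] (M : X → I → ι → ι → ℂ)
    (hM : Continuous fun p : X × I => M p.1 p.2)
    (hrank : ∀ x t, ∃ v : ι → ℂ, v ≠ 0 ∧ ∀ i j, M x t i j = v i * conj (v j))
    (h1 : ∀ x y, M x 1 = M y 1) (hne : Nonempty X) :
    ∃ sec : X → ι → ℂ, Continuous sec ∧ ∀ x, ∀ v : ι → ℂ,
      (∀ i j, M x 0 i j = v i * conj (v j)) → ∃ c : ℂ, c ≠ 0 ∧ ∀ i, sec x i = c * v i := by
  have hMij : ∀ i j, Continuous fun p : X × I => M p.1 p.2 i j := fun i j => by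
    fun_prop
  refine S2aux.propagate (X := X)
    {p | ∑ i, ∑ j, M p.1 p.2.1 i j * M p.1 p.2.2 j i ≠ 0} ?_ ?_
    (fun t => ∃ sec : X → ι → ℂ, Continuous sec ∧ ∀ x, ∀ v : ι → ℂ,
      (∀ i j, M x t i j = v i * conj (v j)) → ∃ c : ℂ, c ≠ 0 ∧ ∀ i, sec x i = c * v i) ?_ 1 0 ?_
  · apply isOpen_ne_fun _ continuous_const
    refine continuous_finsetSum _ fun i _ => continuous_finsetSum _ fun j _ => ?_
    exact ((hMij i j).comp (f := fun p : X × I × I => (p.1, p.2.1)) (by fun_prop)).mul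
      ((hMij j i).comp (f := fun p : X × I × I => (p.1, p.2.2)) (by fun_prop))
  · intro x t
    obtain ⟨v, hv, hvM⟩ := hrank x t
    have : ∑ i, ∑ j, M x t i j * M x t j i
        = (∑ i, v i * conj (v i)) * (∑ i, v i * conj (v i)) := by
      rw [Finset.sum_mul_sum]
      refine Finset.sum_congr rfl fun i _ => Finset.sum_congr rfl fun j _ => ?_
      rw [hvM, hvM]; ring
    simp only [Set.mem_ofPred_eq, this]
    exact mul_ne_zero (S2aux.sum_conj_ne v hv) (S2aux.sum_conj_ne v hv)
  · rintro s t hst - ⟨sec, hs, hsv⟩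
    refine ⟨fun x i => ∑ j, M x t i j * sec x j, ?_, ?_⟩
    · refine continuous_pi fun i => continuous_finsetSum _ fun j _ => ?_
      exact ((hMij i j).comp (f := fun x : X => (x, t)) (by fun_prop)).mul (by fun_prop)
    · intro x v hv
      obtain ⟨w, hw, hwM⟩ := hrank x s
      obtain ⟨c, hc, hcw⟩ := hsv x w hwM
      refine ⟨c * ∑ j, conj (v j) * w j, mul_ne_zero hc ?_, ?_⟩
      · intro h0
        apply hst x
        have : ∑ i, ∑ j, M x s i j * M x t j i
            = (∑ i, w i * conj (v i)) * (∑ j, conj (w j) * v j) := by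
          rw [Finset.sum_mul_sum]
          refine Finset.sum_congr rfl fun i _ => Finset.sum_congr rfl fun j _ => ?_
          rw [hv, hwM]; ring
        change ∑ i, ∑ j, M x s i j * M x t j i = 0
        rw [this]
        have h3 : ∑ i, w i * conj (v i) = 0 := by
          rw [← h0]; exact Finset.sum_congr rfl fun i _ => mul_comm _ _
        rw [h3, zero_mul]
      · intro i
        simp only [hv, hcw, Finset.mul_sum, Finset.sum_mul]
        refine Finset.sum_congr rfl fun j _ => ?_
        ring
  · obtain ⟨x₁⟩ := hne
    obtain ⟨w, hw, hwM⟩ := hrank x₁ 1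
    refine ⟨fun _ => w, continuous_const, ?_⟩
    intro x v hv
    have hE : ∀ i j, v i * conj (v j) = w i * conj (w j) := fun i j => by
      rw [← hv, ← hwM, h1 x x₁]
    have hmul : ∀ i, w i * (∑ j, w j * conj (w j)) = (∑ j, w j * conj (v j)) * v i := by
      intro i
      rw [Finset.mul_sum, Finset.sum_mul]
      refine Finset.sum_congr rfl fun j _ => ?_
      calc w i * (w j * conj (w j)) = w j * (w i * conj (w j)) := by ring
        _ = w j * (v i * conj (v j)) := by rw [hE]
        _ = _ := by ring
    have hn := S2aux.sum_conj_ne w hw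
    refine ⟨(∑ j, w j * conj (v j)) / (∑ j, w j * conj (w j)), ?_, ?_⟩
    · intro h0
      rcases div_eq_zero_iff.1 h0 with h | h
      · apply hw
        funext i
        have := hmul i
        rw [h, zero_mul] at this
        exact (mul_eq_zero.1 this).resolve_right hn
      · exact hn h
    · intro i
      rw [div_mul_eq_mul_div, ← hmul i, mul_div_assoc, div_self hn, mul_one]

/-- The identity of the circle has no continuous logarithm. -/
theorem S2aux.no_log (L : Circle → ℂ) (hL : Continuous L)
    (h : ∀ z : Circle, Complex.exp (L z) = z) : False := by
  let k : ℝ → ℝ := fun θ => (L (Circle.exp θ)).im - θ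
  have hk : Continuous k := by
    have : Continuous fun θ : ℝ => L (Circle.exp θ) := hL.comp Circle.exp.continuous
    exact (Complex.continuous_im.comp this).sub continuous_id
  have hcos : ∀ θ, Real.cos (k θ) = 1 := by
    intro θ
    have h1 := h (Circle.exp θ)
    have hre : Real.exp (L (Circle.exp θ)).re = 1 := by
      rw [← Complex.norm_exp, h1, Circle.norm_coe]
    have h2 : Complex.exp (L (Circle.exp θ) - θ * Complex.I) = 1 := by
      rw [Complex.exp_sub, h1, Circle.coe_exp, div_self (Complex.exp_ne_zero _)]
    have h3 := congrArg Complex.re h2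
    rw [Complex.exp_re] at h3
    simpa [hre, k] using h3
  have h2π : k (2 * Real.pi) = k 0 - 2 * Real.pi := by
    simp [k]
  have hπ := Real.pi_pos
  obtain ⟨θ, -, hθ⟩ := intermediate_value_Icc' (by positivity : (0:ℝ) ≤ 2 * Real.pi)
    hk.continuousOn (show k 0 - Real.pi ∈ Set.Icc (k (2 * Real.pi)) (k 0) by
      rw [h2π]; constructor <;> linarith)
  have h4 := hcos θ
  rw [hθ, Real.cos_sub_pi, hcos 0] at h4
  norm_num at h4

open unitInterval in
/-- The identity of the circle is not null-homotopic in the punctured plane. -/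
theorem S2aux.no_null (G : Circle × I → ℂ) (hG : Continuous G) (hG0 : ∀ p, G p ≠ 0)
    (h0 : ∀ z w, G (z, 0) = G (w, 0)) (h1 : ∀ z, G (z, 1) = z) : False := by
  obtain ⟨L, hL, hLG⟩ := S2aux.propagate (X := Circle)
    {p | G (p.1, p.2.2) / G (p.1, p.2.1) ∈ Complex.slitPlane} (by
      refine Complex.isOpen_slitPlane.preimage (Continuous.div ?_ ?_ ?_)
      · exact hG.comp (by fun_prop)
      · exact hG.comp (by fun_prop)
      · exact fun p => hG0 _)
    (fun x t => by simp [div_self (hG0 _)])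
    (fun t => ∃ L : Circle → ℂ, Continuous L ∧ ∀ z, Complex.exp (L z) = G (z, t))
    (by
      rintro s t hst - ⟨L, hL, hLG⟩
      refine ⟨fun z => L z + Complex.log (G (z, t) / G (z, s)), ?_, ?_⟩
      · refine hL.add (Continuous.clog (Continuous.div ?_ ?_ fun z => hG0 _) hst)
        · exact hG.comp (by fun_prop)
        · exact hG.comp (by fun_prop)
      · intro z
        rw [Complex.exp_add, hLG, Complex.exp_log (div_ne_zero (hG0 _) (hG0 _)),
          mul_div_cancel₀ _ (hG0 _)])
    0 1 ⟨fun _ => Complex.log (G (1, 0)), continuous_const, fun z => by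
      rw [Complex.exp_log (hG0 _), h0]⟩
  exact S2aux.no_log L hL fun z => by rw [hLG, h1]

/-- Twice the rank-one projection onto the line of `ℂ²` corresponding to `x`. -/
noncomputable def S2aux.pA (x : S2) : Fin 2 → Fin 2 → ℂ :=
  ![![1 + (x.1 2 : ℂ), x.1 0 - x.1 1 * Complex.I],
    ![x.1 0 + x.1 1 * Complex.I, 1 - (x.1 2 : ℂ)]]

theorem S2aux.coord (x : S2) : x.1 0 ^ 2 + x.1 1 ^ 2 + x.1 2 ^ 2 = 1 := by
  have h := x.2
  rw [mem_sphere_zero_iff_norm, EuclideanSpace.norm_eq, Real.sqrt_eq_one] at h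
  simpa [Fin.sum_univ_three] using h

theorem S2aux.pA_cont (i j : Fin 2) : Continuous fun x : S2 => S2aux.pA x i j := by
  have h : ∀ k : Fin 3, Continuous fun x : S2 => ((x.1 k : ℝ) : ℂ) := fun k => by fun_prop
  have h0 := h 0
  have h1 := h 1
  have h2 := h 2
  fin_cases i <;> fin_cases j <;> simp [S2aux.pA] <;> fun_prop

open ComplexConjugate in
theorem S2aux.rep (x : S2) : ∃ u : Fin 2 → ℂ, ∀ i j, S2aux.pA x i j = u i * conj (u j) := by
  have hc := S2aux.coord x
  generalize ha : x.1 0 = a at hc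
  generalize hb : x.1 1 = b at hc
  generalize hcc : x.1 2 = c at hc
  by_cases h : 1 + c = 0
  · have hc' : c = -1 := by linarith
    subst hc'
    have ha0 : a = 0 := by nlinarith [sq_nonneg a, sq_nonneg b]
    have hb0 : b = 0 := by nlinarith [sq_nonneg a, sq_nonneg b]
    refine ⟨![0, (Real.sqrt 2 : ℝ)], ?_⟩
    have h2 : ((Real.sqrt 2 : ℝ) : ℂ) * (Real.sqrt 2 : ℝ) = 2 := by
      rw [← Complex.ofReal_mul, Real.mul_self_sqrt (by norm_num)]; norm_num
    intro i j
    fin_cases i <;> fin_cases j <;> simp [S2aux.pA, ha, hb, hcc, ha0, hb0, h2]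
    norm_num
  · have hpos : 0 < 1 + c := lt_of_le_of_ne (by nlinarith [sq_nonneg a, sq_nonneg b]) (Ne.symm h)
    obtain ⟨r, hr, hrr⟩ : ∃ r : ℝ, r ≠ 0 ∧ r * r = 1 + c :=
      ⟨Real.sqrt (1 + c), (Real.sqrt_pos.2 hpos).ne', Real.mul_self_sqrt hpos.le⟩
    have hrC : (r : ℂ) ≠ 0 := by exact_mod_cast hr
    have hrrC : (r : ℂ) * r = 1 + c := by exact_mod_cast hrr
    have hcC : (a : ℂ) ^ 2 + b ^ 2 + c ^ 2 = 1 := by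
      rw [← Complex.ofReal_one, ← hc]; push_cast; rfl
    refine ⟨![r, (a + b * Complex.I) / r], ?_⟩
    intro i j
    fin_cases i <;> fin_cases j <;> simp [S2aux.pA, ha, hb, hcc]
    · rw [hrrC]
    · field_simp
      ring
    · field_simp
    · field_simp
      linear_combination (1 - (c : ℂ)) * hrrC - hcC + (b : ℂ) ^ 2 * Complex.I_sq

/-- The rank-one form attached to an (ordered) pair of points. -/
noncomputable def S2aux.form (x y : S2) (p q : Fin 2 × Fin 2) : ℂ :=
  S2aux.pA x p.1 q.1 * S2aux.pA y p.2 q.2 + S2aux.pA x p.1 q.2 * S2aux.pA y p.2 q.1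
    + S2aux.pA x p.2 q.1 * S2aux.pA y p.1 q.2 + S2aux.pA x p.2 q.2 * S2aux.pA y p.1 q.1

theorem S2aux.form_symm (x y : S2) : S2aux.form x y = S2aux.form y x := by
  funext p q
  simp only [S2aux.form]
  ring

/-- The form on unordered pairs. -/
noncomputable def S2aux.symForm : Sym2 S2 → (Fin 2 × Fin 2) → (Fin 2 × Fin 2) → ℂ :=
  Sym2.lift ⟨S2aux.form, S2aux.form_symm⟩

theorem S2aux.symForm_cont : Continuous S2aux.symForm := by
  refine continuous_quot_lift _ ?_
  refine continuous_pi fun p => continuous_pi fun q => ?_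
  have hx : ∀ i j, Continuous fun z : S2 × S2 => S2aux.pA z.1 i j :=
    fun i j => (S2aux.pA_cont i j).comp continuous_fst
  have hy : ∀ i j, Continuous fun z : S2 × S2 => S2aux.pA z.2 i j :=
    fun i j => (S2aux.pA_cont i j).comp continuous_snd
  exact (((hx _ _).mul (hy _ _)).add ((hx _ _).mul (hy _ _))).add
    ((hx _ _).mul (hy _ _)) |>.add ((hx _ _).mul (hy _ _))

open ComplexConjugate in
theorem S2aux.form_rep (x y : S2) (u w : Fin 2 → ℂ)
    (hu : ∀ i j, S2aux.pA x i j = u i * conj (u j))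
    (hw : ∀ i j, S2aux.pA y i j = w i * conj (w j)) (p q : Fin 2 × Fin 2) :
    S2aux.form x y p q = (u p.1 * w p.2 + u p.2 * w p.1)
      * conj (u q.1 * w q.2 + u q.2 * w q.1) := by
  simp only [S2aux.form, hu, hw, map_add, map_mul]
  ring

open ComplexConjugate in
theorem S2aux.rep_sum (x : S2) (u : Fin 2 → ℂ)
    (hu : ∀ i j, S2aux.pA x i j = u i * conj (u j)) :
    u 0 * conj (u 0) + u 1 * conj (u 1) = 2 := by
  rw [← hu, ← hu]
  simp [S2aux.pA]
  ring

open ComplexConjugate in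
theorem S2aux.symForm_rank (y : Sym2 S2) : ∃ v : Fin 2 × Fin 2 → ℂ, v ≠ 0 ∧
    ∀ i j, S2aux.symForm y i j = v i * conj (v j) := by
  induction y using Sym2.ind with
  | _ x y =>
    obtain ⟨u, hu⟩ := S2aux.rep x
    obtain ⟨w, hw⟩ := S2aux.rep y
    refine ⟨fun p => u p.1 * w p.2 + u p.2 * w p.1, ?_, S2aux.form_rep x y u w hu hw⟩
    intro h
    have hus := S2aux.rep_sum x u hu
    have hws := S2aux.rep_sum y w hw
    have h00 := congrFun h (0, 0)
    have h01 := congrFun h (0, 1)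
    have h11 := congrFun h (1, 1)
    simp only [Pi.zero_apply] at h00 h01 h11
    have h00' : u 0 = 0 ∨ w 0 = 0 := by
      rw [← mul_eq_zero]; linear_combination h00 / 2
    have h11' : u 1 = 0 ∨ w 1 = 0 := by
      rw [← mul_eq_zero]; linear_combination h11 / 2
    rcases h00' with h0 | h0 <;> rcases h11' with h1 | h1 <;>
      simp [h0, h1] at hus hws h01
    · rcases h01 with h2 | h2
      · simp [h2] at hus
      · simp [h2] at hws
    · rcases h01 with h2 | h2
      · simp [h2] at hus
      · simp [h2] at hws

open ComplexConjugate in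
/-- There is no nonvanishing section of the tautological bundle over the sphere. -/
theorem S2aux.no_section (q : S2 → Fin 2 → ℂ) (hq : Continuous q)
    (h : ∀ x, ∃ u : Fin 2 → ℂ, ∃ c : ℂ, (∀ i j, S2aux.pA x i j = u i * conj (u j)) ∧
      c ≠ 0 ∧ ∀ i, q x i = c * u i) : False := by
  have hup : ∀ x : S2, 0 ≤ x.1 2 → q x 0 ≠ 0 := by
    intro x hx h0
    obtain ⟨u, c, hu, hc, hqc⟩ := h x
    rw [hqc] at h0
    have h1 := hu 0 0
    rw [(mul_eq_zero.1 h0).resolve_left hc] at h1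
    simp [S2aux.pA] at h1
    have : 1 + x.1 2 = 0 := by simpa using congrArg Complex.re h1
    linarith
  have hdown : ∀ x : S2, x.1 2 ≤ 0 → q x 1 ≠ 0 := by
    intro x hx h0
    obtain ⟨u, c, hu, hc, hqc⟩ := h x
    rw [hqc] at h0
    have h1 := hu 1 1
    rw [(mul_eq_zero.1 h0).resolve_left hc] at h1
    simp [S2aux.pA] at h1
    have : 1 - x.1 2 = 0 := by simpa using congrArg Complex.re h1
    linarith
  have heq : ∀ x : S2, x.1 2 = 0 → q x 1 = (x.1 0 + x.1 1 * Complex.I) * q x 0 := by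
    intro x hx
    obtain ⟨u, c, hu, hc, hqc⟩ := h x
    have h1 := hu 0 0
    have h2 := hu 1 0
    simp [S2aux.pA, hx] at h1 h2
    rw [hqc, hqc, h2]
    linear_combination c * u 1 * h1
  have hmem : ∀ (ε : ℝ), ε ^ 2 = 1 → ∀ p : Circle × unitInterval,
      (!₂[(p.2 : ℝ) * (p.1 : ℂ).re, (p.2 : ℝ) * (p.1 : ℂ).im, ε * Real.sqrt (1 - (p.2 : ℝ) ^ 2)] :
        EuclideanSpace ℝ (Fin 3)) ∈ Metric.sphere (0 : EuclideanSpace ℝ (Fin 3)) 1 := by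
    intro ε hε p
    have h1 : (p.1 : ℂ).re ^ 2 + (p.1 : ℂ).im ^ 2 = 1 := by
      have := Circle.normSq_coe p.1
      rw [Complex.normSq_apply] at this
      linarith
    have hp0 := p.2.2.1
    have hp1 := p.2.2.2
    have h2 : Real.sqrt (1 - (p.2 : ℝ) ^ 2) ^ 2 = 1 - (p.2 : ℝ) ^ 2 :=
      Real.sq_sqrt (by nlinarith)
    rw [mem_sphere_zero_iff_norm, EuclideanSpace.norm_eq, Real.sqrt_eq_one]
    simp only [Fin.sum_univ_three, Real.norm_eq_abs, sq_abs]
    simp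
    rw [mul_pow ε, hε, h2]
    linear_combination (p.2 : ℝ) ^ 2 * h1
  let pt : ∀ (ε : ℝ), ε ^ 2 = 1 → Circle × unitInterval → S2 := fun ε hε p => ⟨_, hmem ε hε p⟩
  have hpt : ∀ ε hε, Continuous (pt ε hε) := by
    intro ε hε
    refine Continuous.subtype_mk ?_ _
    refine (PiLp.continuous_toLp 2 _).comp (continuous_pi fun i => ?_)
    have hre : Continuous fun p : Circle × unitInterval => (p.1 : ℂ).re :=
      Complex.continuous_re.comp (by fun_prop)
    have him : Continuous fun p : Circle × unitInterval => (p.1 : ℂ).im :=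
      Complex.continuous_im.comp (by fun_prop)
    fin_cases i <;> simp <;> fun_prop
  have hp : (1 : ℝ) ^ 2 = 1 := by norm_num
  have hm : (-1 : ℝ) ^ 2 = 1 := by norm_num
  have hptp : ∀ p, q (pt 1 hp p) 0 ≠ 0 := fun p => hup _ (by simp [pt])
  have hptm : ∀ p, q (pt (-1) hm p) 1 ≠ 0 := fun p => hdown _ (by simp [pt])
  refine S2aux.no_null (fun p => q (pt (-1) hm p) 1 / q (pt 1 hp p) 0) ?_ ?_ ?_ ?_
  · refine Continuous.div ?_ ?_ hptp
    · exact (continuous_apply (1 : Fin 2)).comp (hq.comp (hpt (-1) hm))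
    · exact (continuous_apply (0 : Fin 2)).comp (hq.comp (hpt 1 hp))
  · exact fun p => div_ne_zero (hptm p) (hptp p)
  · intro z w
    simp [pt]
  · intro z
    have h1 : pt (-1) hm (z, 1) = pt 1 hp (z, 1) := by simp [pt]
    have h2 := heq (pt 1 hp (z, 1)) (by simp [pt])
    simp only [h1]
    rw [h2, mul_div_assoc, div_self (hptp _), mul_one]
    simp [pt, Complex.re_add_im]

open ComplexConjugate in
theorem S2aux.main (x₀ : S2) (Φ₀ : C(S2, Sym2 S2)) (hΦ₀ : ∀ x, Φ₀ x = s(x, x₀))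
    (y : Sym2 S2) (H : Φ₀.Homotopy (ContinuousMap.const S2 y)) : False := by
  have : CompactSpace S2 := inferInstance
  obtain ⟨sec, hs, hsv⟩ := S2aux.section_exists (X := S2)
    (fun x t => S2aux.symForm (H (t, x)))
    (S2aux.symForm_cont.comp (H.continuous.comp (by fun_prop)))
    (fun x t => S2aux.symForm_rank _)
    (fun x z => by simp) ⟨x₀⟩
  obtain ⟨w, hw⟩ := S2aux.rep x₀
  have hws := S2aux.rep_sum x₀ w hw
  refine S2aux.no_section (fun x i =>
    ((∑ j, sec x (i, j) * conj (w j))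
      - w i * (∑ k, ∑ j, sec x (k, j) * conj (w k) * conj (w j)) / 4) / 2) ?_ ?_
  · have : ∀ p, Continuous fun x => sec x p := fun p => by fun_prop
    refine continuous_pi fun i => ?_
    fun_prop
  · intro x
    obtain ⟨u, hu⟩ := S2aux.rep x
    obtain ⟨c, hc, hcv⟩ := hsv x (fun p => u p.1 * w p.2 + u p.2 * w p.1) (by
      intro i j
      simp only [ContinuousMap.Homotopy.apply_zero, hΦ₀]
      exact S2aux.form_rep x x₀ u w hu hw i j)
    refine ⟨u, c, hu, hc, ?_⟩
    intro i
    simp only [hcv, Fin.sum_univ_two]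
    have key : ∀ i : Fin 2, i = 0 ∨ i = 1 := by decide
    rcases key i with rfl | rfl
    · linear_combination
        (c / 2 * (u 0 - w 0 * (u 0 * conj (w 0) + u 1 * conj (w 1)) / 2)) * hws
    · linear_combination
        (c / 2 * (u 1 - w 1 * (u 0 * conj (w 0) + u 1 * conj (w 1)) / 2)) * hws

/-- The map `Φ₀ : S² → Sym2 S²`, `x ↦ ⟦(x, x₀)⟧`, is not homotopic to a constant map. -/
theorem stmt_8 (x₀ : S2) (Φ₀ : C(S2, Sym2 S2)) (hΦ₀ : ∀ x, Φ₀ x = s(x, x₀)) :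
    ∀ y : Sym2 S2, ¬ Φ₀.Homotopic (ContinuousMap.const S2 y) := by
  rintro y ⟨H⟩
  exact S2aux.main x₀ Φ₀ hΦ₀ y H
end

section
/- Let S² be the unit sphere in three-dimensional Euclidean space, fix x₀ ∈ S², and let Φ₀ : S² → Sym2 S² be the continuous map Φ₀(x) = ⟦(x, x₀)⟧. If φ : S² → Sym2 S² is a continuous map such that φ(x) is a diagonal pair (i.e., φ(x) = ⟦(p,p)⟧ for some p ∈ S², equivalently Sym2.IsDiag (φ x)) for every x ∈ S², then φ is not homotopic to Φ₀. -/
open scoped ComplexConjugate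

namespace SymSphere

/-- Parallel transport of vectors along a continuous family of idempotents. -/
lemma transport {X E : Type*} [TopologicalSpace X] [CompactSpace X] [NormedAddCommGroup E]
    [NormedSpace ℂ E] (A : X × unitInterval → (E →L[ℂ] E)) (hA : Continuous A)
    (hid : ∀ p v, A p (A p v) = A p v) (v0 : X → E) (hv0 : Continuous v0)
    (hne : ∀ x, v0 x ≠ 0) (hfix : ∀ x, A (x, 0) (v0 x) = v0 x) :
    ∃ v1 : X → E, Continuous v1 ∧ (∀ x, v1 x ≠ 0) ∧ (∀ x, A (x, 1) (v1 x) = v1 x) ∧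
      ∀ (x y : X) (c : ℂ), (∀ t, A (x, t) = A (y, t)) → v0 x = c • v0 y → v1 x = c • v1 y := by
  let Q : unitInterval → Prop := fun s => ∃ v1 : X → E, Continuous v1 ∧ (∀ x, v1 x ≠ 0) ∧
    (∀ x, A (x, s) (v1 x) = v1 x) ∧
      ∀ (x y : X) (c : ℂ), (∀ t, A (x, t) = A (y, t)) → v0 x = c • v0 y → v1 x = c • v1 y
  let F : C(unitInterval, C(X, E →L[ℂ] E)) :=
    ContinuousMap.curry ⟨fun p : unitInterval × X => A (p.2, p.1), by fun_prop⟩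
  obtain ⟨δ, hδ, hF⟩ := Metric.uniformContinuous_iff (α := unitInterval)
    (β := C(X, E →L[ℂ] E)).1 (CompactSpace.uniformContinuous_of_continuous F.continuous) 1 one_pos
  have step : ∀ s t, dist s t < δ → Q s → Q t := by
    rintro s t hst ⟨v, hv, hvn, hvf, hve⟩
    refine ⟨fun x => A (x, t) (v x), by fun_prop, fun x h0 => ?_, fun x => hid _ _, ?_⟩
    · have h1 : ‖A (x, s) - A (x, t)‖ < 1 := by
        rw [← dist_eq_norm]
        exact lt_of_le_of_lt (ContinuousMap.dist_apply_le_dist (f := F s) (g := F t) x) (hF hst)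
      have h2 : (A (x, s) - A (x, t)) (v x) = v x := by
        simp [h0, hvf]
      have h3 := (A (x, s) - A (x, t)).le_opNorm (v x)
      rw [h2] at h3
      have := norm_pos_iff.2 (hvn x)
      nlinarith
    · intro x y c hxy h
      simp only [hxy t, hve x y c hxy h, map_smul]
  have hclopen : IsClopen {t | Q t} := by
    constructor
    · rw [← isOpen_compl_iff, Metric.isOpen_iff]
      intro t ht
      refine ⟨δ, hδ, fun s hs hq => ht (step s t hs hq)⟩
    · rw [Metric.isOpen_iff]
      intro t ht
      refine ⟨δ, hδ, fun s hs => step t s ?_ ht⟩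
      rw [dist_comm]; exact hs
  have h0 : Q 0 := ⟨v0, hv0, hne, hfix, fun _ _ _ _ h => h⟩
  have huniv := hclopen.eq_univ ⟨0, h0⟩
  exact (huniv ▸ Set.mem_univ (1 : unitInterval) : (1 : unitInterval) ∈ {t | Q t})

/-- The winding number obstruction. -/
lemma no_root (g c : ℂ → ℂ) (hg : Continuous g) (hc : Continuous c) (hg0 : ∀ z, g z ≠ 0)
    (h : ∀ z, ‖z‖ = 1 → g z = (c z) ^ 2 * z) : False := by
  obtain ⟨G, hG, hGe⟩ : ∃ G : ℂ → ℂ, Continuous G ∧ ∀ z, Complex.exp (G z) = g z := by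
    let g' : C(ℂ, {z : ℂ // z ≠ 0}) := ⟨fun z => ⟨g z, hg0 z⟩, by fun_prop⟩
    obtain ⟨G, hG, -⟩ := Complex.isCoveringMap_exp.existsUnique_continuousMap_lifts g'
      (a₀ := 0) (e₀ := Complex.log (g 0)) (by ext; simp [g', Complex.exp_log (hg0 0)])
    refine ⟨G, G.continuous, fun z => ?_⟩
    have := congrFun hG.2 z
    exact congrArg Subtype.val this
  let e : ℝ → ℂ := fun θ => Complex.exp (θ * Complex.I)
  have hen : ∀ θ, ‖e θ‖ = 1 := fun θ => Complex.norm_exp_ofReal_mul_I θ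
  have hcn : ∀ θ, c (e θ) ≠ 0 := by
    intro θ h0
    apply hg0 (e θ)
    rw [h _ (hen θ), h0]; simp
  let m : ℝ → ℂ := fun θ => Complex.exp (G (e θ) / 2) / (c (e θ) * Complex.exp (θ / 2 * Complex.I))
  have hm : Continuous m := by
    refine Continuous.div (by fun_prop) (by fun_prop) fun θ => mul_ne_zero (hcn θ) (Complex.exp_ne_zero _)
  have hm2 : ∀ θ, m θ ^ 2 = 1 := by
    intro θ
    simp only [m]
    rw [div_pow, mul_pow, ← Complex.exp_nat_mul, ← Complex.exp_nat_mul]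
    have e1 : ((2 : ℕ) : ℂ) * (G (e θ) / 2) = G (e θ) := by push_cast; ring
    have e2 : ((2 : ℕ) : ℂ) * (θ / 2 * Complex.I) = θ * Complex.I := by push_cast; ring
    rw [e1, e2, hGe, h _ (hen θ)]
    exact div_self (mul_ne_zero (pow_ne_zero _ (hcn θ)) (Complex.exp_ne_zero _))
  have hre : ∀ θ, (m θ).re ≠ 0 := by
    intro θ h0
    rcases mul_self_eq_one_iff.1 ((sq (m θ)).symm.trans (hm2 θ)) with h1 | h1 <;> simp [h1] at h0
  have hper : m (2 * Real.pi) = - m 0 := by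
    have : e (2 * Real.pi) = e 0 := by simp [e, Complex.exp_two_pi_mul_I]
    simp only [m, this]
    have : Complex.exp (((2 * Real.pi : ℝ) : ℂ) / 2 * Complex.I) = -1 := by
      rw [← Complex.exp_pi_mul_I]; congr 1; push_cast; ring
    rw [this]
    simp
    rw [div_neg]
  have : ∃ θ, (m θ).re = 0 := by
    have hc' : Continuous fun θ => (m θ).re := Complex.continuous_re.comp hm
    have h2 : (m (2 * Real.pi)).re = - (m 0).re := by rw [hper]; simp
    rcases le_total 0 (m 0).re with h3 | h3
    · exact mem_range_of_exists_le_of_exists_ge hc' ⟨2 * Real.pi, by linarith⟩ ⟨0, h3⟩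
    · exact mem_range_of_exists_le_of_exists_ge hc' ⟨0, h3⟩ ⟨2 * Real.pi, by linarith⟩
  obtain ⟨θ, hθ⟩ := this
  exact hre θ hθ

section rank_one
set_option linter.unusedSectionVars false
variable {ι : Type} [Fintype ι] [DecidableEq ι]

/-- The linear map from matrices to operators. -/
noncomputable def toOp : Matrix ι ι ℂ →ₗ[ℂ] ((ι → ℂ) →L[ℂ] (ι → ℂ)) :=
  (LinearMap.toContinuousLinearMap (𝕜 := ℂ) (E := ι → ℂ) (F' := ι → ℂ)).toLinearMap ∘ₗ
    (Matrix.toLin' (R := ℂ) (m := ι) (n := ι)).toLinearMap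

lemma toOp_apply (M : Matrix ι ι ℂ) (v : ι → ℂ) (i : ι) : toOp M v i = ∑ j, M i j * v j := by
  simp [toOp, Matrix.mulVec, dotProduct]

lemma continuous_toOp : Continuous (toOp (ι := ι)) := LinearMap.continuous_of_finiteDimensional _

/-- The normalized operator. -/
noncomputable def R (M : Matrix ι ι ℂ) : (ι → ℂ) →L[ℂ] (ι → ℂ) := toOp ((M.trace)⁻¹ • M)

/-- `M` is the rank one matrix determined by `s`. -/
def Rk (M : Matrix ι ι ℂ) (s : ι → ℂ) : Prop := s ≠ 0 ∧ ∀ i j, M i j = s i * conj (s j)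

/-- Hermitian product. -/
noncomputable def ip (s v : ι → ℂ) : ℂ := ∑ j, conj (s j) * v j

lemma ip_smul (s v : ι → ℂ) (c : ℂ) : ip s (c • v) = c * ip s v := by
  simp only [ip, Finset.mul_sum, Pi.smul_apply, smul_eq_mul]
  exact Finset.sum_congr rfl fun _ _ => by ring

lemma ip_self_ne {s : ι → ℂ} (hs : s ≠ 0) : ip s s ≠ 0 := by
  have : ip s s = ((∑ j, Complex.normSq (s j) : ℝ) : ℂ) := by
    simp [ip, Complex.normSq_eq_conj_mul_self]
  rw [this]
  intro h
  rw [Complex.ofReal_eq_zero, Finset.sum_eq_zero_iff_of_nonneg (fun _ _ => Complex.normSq_nonneg _)] at h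
  exact hs (funext fun i => by simpa using h i (Finset.mem_univ _))

lemma Rk.trace {M : Matrix ι ι ℂ} {s : ι → ℂ} (h : Rk M s) : M.trace = ip s s := by
  simp [Matrix.trace, ip, h.2, mul_comm]

lemma Rk.trace_ne {M : Matrix ι ι ℂ} {s : ι → ℂ} (h : Rk M s) : M.trace ≠ 0 :=
  h.trace ▸ ip_self_ne h.1

lemma Rk.apply {M : Matrix ι ι ℂ} {s : ι → ℂ} (h : Rk M s) (v : ι → ℂ) :
    R M v = ((ip s s)⁻¹ * ip s v) • s := by
  ext i
  simp only [R, toOp_apply, h.trace, Matrix.smul_apply, h.2, Pi.smul_apply, smul_eq_mul]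
  simp only [ip, Finset.mul_sum, Finset.sum_mul]
  exact Finset.sum_congr rfl fun _ _ => by ring

lemma Rk.self {M : Matrix ι ι ℂ} {s : ι → ℂ} (h : Rk M s) : R M s = s := by
  rw [h.apply, inv_mul_cancel₀ (ip_self_ne h.1), one_smul]

lemma Rk.idem {M : Matrix ι ι ℂ} {s : ι → ℂ} (h : Rk M s) (v : ι → ℂ) :
    R M (R M v) = R M v := by
  rw [h.apply v, map_smul, h.self]

lemma Rk.fixed {M : Matrix ι ι ℂ} {s : ι → ℂ} (h : Rk M s) {v : ι → ℂ} (hv : R M v = v) :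
    ∃ c : ℂ, v = c • s := ⟨_, hv.symm.trans (h.apply v)⟩

lemma continuous_R {Y : Type*} [TopologicalSpace Y] (M : Y → Matrix ι ι ℂ) (hM : Continuous M)
    (h : ∀ y, (M y).trace ≠ 0) : Continuous fun y => R (M y) :=
  continuous_toOp.comp ((Continuous.inv₀ hM.matrix_trace h).smul hM)

end rank_one
end SymSphere
namespace SymSphere

/-- The spin projector of a point of the sphere. -/
noncomputable def pr (p : S2) : Matrix (Fin 2) (Fin 2) ℂ :=
  !![(1 + (p.1 2 : ℂ)) / 2, ((p.1 0 : ℂ) - p.1 1 * Complex.I) / 2;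
     ((p.1 0 : ℂ) + p.1 1 * Complex.I) / 2, (1 - (p.1 2 : ℂ)) / 2]

lemma continuous_pr : Continuous pr := by
  refine continuous_matrix fun i j => ?_
  fin_cases i <;> fin_cases j <;> simp [pr] <;> fun_prop

lemma sphere_eq (p : S2) : p.1 0 ^ 2 + p.1 1 ^ 2 + p.1 2 ^ 2 = 1 := by
  have := p.2
  rw [mem_sphere_zero_iff_norm, EuclideanSpace.norm_eq, Real.sqrt_eq_one] at this
  simpa [Fin.sum_univ_three] using this

lemma exists_spinor (p : S2) : ∃ u, Rk (pr p) u := by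
  have hs := sphere_eq p
  by_cases hz : p.1 2 = -1
  · have hx : p.1 0 = 0 := by nlinarith [sq_nonneg (p.1 0), sq_nonneg (p.1 1)]
    have hy : p.1 1 = 0 := by nlinarith [sq_nonneg (p.1 0), sq_nonneg (p.1 1)]
    refine ⟨![0, 1], fun h => by simpa using congrFun h 1, fun i j => ?_⟩
    fin_cases i <;> fin_cases j <;> simp [pr, hx, hy, hz]
  · have hz1 : -1 ≤ p.1 2 := by nlinarith [sq_nonneg (p.1 0), sq_nonneg (p.1 1)]
    have hpos : 0 < (1 + p.1 2) / 2 := by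
      have := lt_of_le_of_ne hz1 (Ne.symm hz); linarith
    obtain ⟨r, hr, hr2⟩ : ∃ r : ℝ, r ≠ 0 ∧ r ^ 2 = (1 + p.1 2) / 2 :=
      ⟨√((1 + p.1 2) / 2), (Real.sqrt_pos.2 hpos).ne', Real.sq_sqrt hpos.le⟩
    have hrC : (r : ℂ) ≠ 0 := by exact_mod_cast hr
    have hr2C : (r : ℂ) ^ 2 = (1 + p.1 2) / 2 := by
      rw [← Complex.ofReal_pow, hr2]; push_cast; ring
    have hsC : (p.1 0 : ℂ) ^ 2 + (p.1 1 : ℂ) ^ 2 + (p.1 2 : ℂ) ^ 2 = 1 := by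
      rw [← Complex.ofReal_pow, ← Complex.ofReal_pow, ← Complex.ofReal_pow, ← Complex.ofReal_add,
        ← Complex.ofReal_add, hs, Complex.ofReal_one]
    refine ⟨![(r : ℂ), (p.1 0 + p.1 1 * Complex.I) / (2 * r)],
      fun h => hrC (by simpa using congrFun h 0), fun i j => ?_⟩
    have h2 : conj (2 : ℂ) = 2 := Complex.conj_ofNat 2
    fin_cases i <;> fin_cases j <;> simp [pr, h2]
    · rw [← hr2C]; ring
    · field_simp
      ring
    · field_simp
    · field_simp
      have hI := Complex.I_sq
      linear_combination (2 * (1 - (p.1 2 : ℂ))) * hr2C - hsC + (p.1 1 : ℂ)^2 * hI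

/-- Symmetrized product of spinors. -/
def sy (u w : Fin 2 → ℂ) : Fin 2 × Fin 2 → ℂ := fun i => u i.1 * w i.2 + u i.2 * w i.1

lemma sy_ne {u w : Fin 2 → ℂ} (hu : u ≠ 0) (hw : w ≠ 0) : sy u w ≠ 0 := by
  intro h
  have h00 := congrFun h (0, 0)
  have h01 := congrFun h (0, 1)
  have h11 := congrFun h (1, 1)
  simp only [sy, Pi.zero_apply] at h00 h01 h11
  have a : u 0 = 0 ∨ w 0 = 0 := by
    rw [← mul_eq_zero]; linear_combination h00 / 2
  have b : u 1 = 0 ∨ w 1 = 0 := by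
    rw [← mul_eq_zero]; linear_combination h11 / 2
  have hu' : ¬ (u 0 = 0 ∧ u 1 = 0) := fun ⟨h0, h1⟩ =>
    hu (funext fun i => by fin_cases i <;> simp [h0, h1])
  have hw' : ¬ (w 0 = 0 ∧ w 1 = 0) := fun ⟨h0, h1⟩ =>
    hw (funext fun i => by fin_cases i <;> simp [h0, h1])
  rcases a with a | a <;> rcases b with b | b
  · exact hu' ⟨a, b⟩
  · simp only [a, b, zero_mul, zero_add, mul_eq_zero] at h01; tauto
  · simp only [a, b, mul_zero, add_zero, zero_mul, mul_eq_zero] at h01; tauto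
  · exact hw' ⟨a, b⟩

/-- Symmetrized product of projectors. -/
def symB (P Q : Matrix (Fin 2) (Fin 2) ℂ) : Matrix (Fin 2 × Fin 2) (Fin 2 × Fin 2) ℂ :=
  Matrix.of fun i j => P i.1 j.1 * Q i.2 j.2 + P i.1 j.2 * Q i.2 j.1 +
    P i.2 j.1 * Q i.1 j.2 + P i.2 j.2 * Q i.1 j.1

lemma symB_rk {P Q : Matrix (Fin 2) (Fin 2) ℂ} {u w : Fin 2 → ℂ} (hP : Rk P u) (hQ : Rk Q w) :
    Rk (symB P Q) (sy u w) := by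
  refine ⟨sy_ne hP.1 hQ.1, fun i j => ?_⟩
  simp only [symB, Matrix.of_apply, hP.2, hQ.2, sy, map_add, map_mul]
  ring

/-- The matrix attached to an unordered pair of points. -/
noncomputable def K : Sym2 S2 → Matrix (Fin 2 × Fin 2) (Fin 2 × Fin 2) ℂ :=
  Sym2.lift ⟨fun p q => symB (pr p) (pr q), fun p q => by
    ext i j; simp only [symB, Matrix.of_apply]; ring⟩

lemma K_mk (p q : S2) : K s(p, q) = symB (pr p) (pr q) := rfl

lemma continuous_K : Continuous K := by
  refine continuous_quot_lift _ ?_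
  refine continuous_matrix fun i j => ?_
  have h1 : ∀ i j, Continuous fun p : S2 × S2 => pr p.1 i j := fun i j =>
    (continuous_pr.comp continuous_fst).matrix_elem i j
  have h2 : ∀ i j, Continuous fun p : S2 × S2 => pr p.2 i j := fun i j =>
    (continuous_pr.comp continuous_snd).matrix_elem i j
  exact ((((h1 _ _).mul (h2 _ _)).add ((h1 _ _).mul (h2 _ _))).add
    ((h1 _ _).mul (h2 _ _))).add ((h1 _ _).mul (h2 _ _))

lemma K_rk (z : Sym2 S2) : ∃ s, Rk (K z) s := by
  induction z using Sym2.ind with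
  | _ p q =>
    obtain ⟨u, hu⟩ := exists_spinor p
    obtain ⟨w, hw⟩ := exists_spinor q
    exact ⟨_, symB_rk hu hw⟩

/-- A continuous family of diagonal pairs comes from a continuous family of points. -/
lemma diag_lift (φ : C(S2, Sym2 S2)) (hφ : ∀ x, (φ x).IsDiag) :
    ∃ f : S2 → S2, Continuous f ∧ ∀ x, φ x = s(f x, f x) := by
  have : ∀ x, ∃ p, φ x = s(p, p) := by
    intro x
    have h := hφ x
    generalize φ x = z at h
    induction z using Sym2.ind with
    | _ p q =>
      rw [Sym2.mk_isDiag_iff] at h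
      exact ⟨p, by rw [h]⟩
  choose f hf using this
  refine ⟨f, ?_, hf⟩
  let mid : Sym2 S2 → EuclideanSpace ℝ (Fin 3) :=
    Sym2.lift ⟨fun p q => (1 / 2 : ℝ) • (p.1 + q.1), fun p q => by simp only [add_comm]⟩
  have hmid : Continuous mid := by
    refine continuous_quot_lift _ ?_
    exact (((continuous_subtype_val.comp continuous_fst).add
      (continuous_subtype_val.comp continuous_snd)).const_smul (1 / 2 : ℝ))
  refine continuous_induced_rng.2 ?_
  have : (Subtype.val ∘ f) = fun x => mid (φ x) := by
    funext x
    rw [hf x]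
    change (f x).1 = (1 / 2 : ℝ) • ((f x).1 + (f x).1)
    rw [← two_smul ℝ, smul_smul]; norm_num
  rw [this]
  exact hmid.comp φ.continuous

/-- The closed unit disk. -/
abbrev Dk : Type := Metric.closedBall (0 : ℂ) 1

/-- A section of the Hopf map over the disk. -/
noncomputable def spin (z : Dk) : Fin 2 → ℂ := ![((√(1 - ‖z.1‖ ^ 2) : ℝ) : ℂ), z.1]

lemma continuous_spin : Continuous spin := by
  refine continuous_pi fun i => ?_
  fin_cases i <;> simp [spin] <;> fun_prop

lemma Dk.le (z : Dk) : ‖z.1‖ ≤ 1 := mem_closedBall_zero_iff.1 z.2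

/-- The quotient map from the disk to the sphere. -/
noncomputable def q (z : Dk) : S2 :=
  ⟨!₂[2 * √(1 - ‖z.1‖ ^ 2) * z.1.re, 2 * √(1 - ‖z.1‖ ^ 2) * z.1.im, 1 - 2 * ‖z.1‖ ^ 2], by
    have h : 0 ≤ 1 - ‖z.1‖ ^ 2 := by have := z.le; nlinarith [norm_nonneg z.1]
    rw [mem_sphere_zero_iff_norm, EuclideanSpace.norm_eq, Real.sqrt_eq_one]
    have h1 := Real.sq_sqrt h
    have h2 : ‖z.1‖ ^ 2 = z.1.re ^ 2 + z.1.im ^ 2 := by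
      rw [← Complex.normSq_eq_norm_sq, Complex.normSq_apply]; ring
    simp only [Fin.sum_univ_three, Real.norm_eq_abs, sq_abs]
    simp
    rw [mul_pow, mul_pow, mul_pow, mul_pow, h1, h2]
    ring⟩

lemma continuous_q : Continuous q := by
  refine continuous_induced_rng.2 ?_
  refine (PiLp.continuous_toLp 2 _).comp (continuous_pi fun i => ?_)
  fin_cases i <;> simp <;> fun_prop

lemma q_rk (z : Dk) : Rk (pr (q z)) (spin z) := by
  have h : 0 ≤ 1 - ‖z.1‖ ^ 2 := by have := z.le; nlinarith [norm_nonneg z.1]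
  have h1 := Real.sq_sqrt h
  have h1C : ((√(1 - ‖z.1‖ ^ 2) : ℝ) : ℂ) ^ 2 = 1 - (‖z.1‖ : ℂ) ^ 2 := by exact_mod_cast h1
  have h3 : z.1 * conj z.1 = (‖z.1‖ : ℂ) ^ 2 := Complex.mul_conj' z.1
  constructor
  · intro h0
    have a := congrFun h0 0
    have b := congrFun h0 1
    simp only [spin, Matrix.cons_val_zero, Matrix.cons_val_one, Pi.zero_apply] at a b
    rw [a, b] at h1C
    simp at h1C
  · have e1 : (z.1.re : ℂ) + z.1.im * Complex.I = z.1 := Complex.re_add_im _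
    have e2 : (z.1.re : ℂ) - z.1.im * Complex.I = conj z.1 := by
      apply Complex.ext <;> simp
    intro i j
    fin_cases i <;> fin_cases j <;> simp [pr, q, spin]
    · linear_combination -h1C
    · linear_combination ((√(1 - ‖z.1‖ ^ 2) : ℝ) : ℂ) * e2
    · linear_combination ((√(1 - ‖z.1‖ ^ 2) : ℝ) : ℂ) * e1
    · linear_combination -h3

/-- The base point of the boundary circle. -/
def one' : Dk := ⟨1, by simp⟩

lemma q_bd (z : Dk) (h : ‖z.1‖ = 1) : q z = q one' := by
  apply Subtype.ext
  simp [q, h, one']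

lemma spin_bd (z : Dk) (h : ‖z.1‖ = 1) : spin z = z.1 • spin one' := by
  funext i
  fin_cases i <;> simp [spin, h, one']

/-- Scaling in the disk. -/
def sc (z : Dk) (t : unitInterval) : Dk := ⟨(t : ℝ) * z.1, by
  have := z.le
  have h0 := t.2.1
  have h1 := t.2.2
  simp [abs_of_nonneg h0]
  nlinarith [norm_nonneg z.1]⟩

lemma continuous_sc : Continuous fun p : Dk × unitInterval => sc p.1 p.2 := by
  refine continuous_induced_rng.2 ?_
  change Continuous fun p : Dk × unitInterval => (((p.2 : ℝ) : ℂ) * p.1.1)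
  fun_prop

/-- Radial retraction to the disk. -/
noncomputable def ret (z : ℂ) : Dk := ⟨((max 1 ‖z‖ : ℝ) : ℂ)⁻¹ * z, by
  have h : 0 < max 1 ‖z‖ := lt_of_lt_of_le one_pos (le_max_left _ _)
  rw [mem_closedBall_zero_iff, norm_mul, norm_inv, Complex.norm_real, Real.norm_of_nonneg h.le,
    inv_mul_le_iff₀ h]
  simp⟩

lemma continuous_ret : Continuous ret := by
  refine continuous_induced_rng.2 ?_
  refine Continuous.mul (Continuous.inv₀ (by fun_prop) fun z => ?_) continuous_id
  have h : 0 < max 1 ‖z‖ := lt_of_lt_of_le one_pos (le_max_left _ _)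
  exact_mod_cast h.ne'

lemma ret_bd (z : ℂ) (h : ‖z‖ = 1) : (ret z).1 = z := by simp [ret, h]

instance : CompactSpace Dk := isCompact_iff_compactSpace.1 (isCompact_closedBall _ _)

end SymSphere

open SymSphere in
/-- A continuous map `φ : S² → Sym2 S²` whose values are all diagonal pairs is not
homotopic to the map `Φ₀ : x ↦ ⟦(x, x₀)⟧`. -/
theorem stmt_9 (x₀ : S2) (Φ₀ φ : C(S2, Sym2 S2)) (hΦ₀ : ∀ x, Φ₀ x = s(x, x₀))
    (hφ : ∀ x, (φ x).IsDiag) : ¬ φ.Homotopic Φ₀ := by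
  intro hH
  obtain ⟨H⟩ := hH.symm
  obtain ⟨f, hf, hfφ⟩ := diag_lift φ hφ
  obtain ⟨w, hw⟩ := exists_spinor x₀
  -- transport along the homotopy
  obtain ⟨v, hv, hvn, hvf, hve⟩ := transport (X := Dk)
    (fun p => R (K (H (p.2, q p.1))))
    (continuous_R _ (continuous_K.comp (H.continuous.comp
      (continuous_snd.prodMk (continuous_q.comp continuous_fst))))
      (fun p => (K_rk _).choose_spec.trace_ne))
    (fun p v => (K_rk _).choose_spec.idem v)
    (fun z => sy (spin z) w)
    (by
      have := continuous_spin
      refine continuous_pi fun i => ?_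
      simp only [sy]
      fun_prop)
    (fun z => sy_ne (q_rk z).1 hw.1)
    (fun z => by
      simp only [H.apply_zero, hΦ₀, K_mk]
      exact (symB_rk (q_rk z) hw).self)
  -- lift of `f ∘ q` to spinors
  let z0 : Dk := ⟨0, by simp⟩
  obtain ⟨u0, hu0⟩ := exists_spinor (f (q z0))
  obtain ⟨u, hu, hun, huf, -⟩ := transport (X := Dk)
    (fun p => R (pr (f (q (sc p.1 p.2)))))
    (continuous_R _ (continuous_pr.comp (hf.comp (continuous_q.comp continuous_sc)))
      (fun p => (exists_spinor _).choose_spec.trace_ne))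
    (fun p v => (exists_spinor _).choose_spec.idem v)
    (fun _ => u0) continuous_const (fun _ => hu0.1)
    (fun z => by
      have : sc z 0 = z0 := by apply Subtype.ext; simp [sc, z0]
      simp only [this]
      exact hu0.self)
  have huf' : ∀ z, R (pr (f (q z))) (u z) = u z := by
    intro z
    have h := huf z
    have : sc z 1 = z := by apply Subtype.ext; simp [sc]
    simpa only [this] using h
  have hvf' : ∀ z, R (symB (pr (f (q z))) (pr (f (q z)))) (v z) = v z := by
    intro z
    have h := hvf z
    simpa only [H.apply_one, hfφ, K_mk] using h
  have hvb : ∀ z : Dk, ‖z.1‖ = 1 → v z = z.1 • v one' := by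
    intro z hz
    refine hve z one' z.1 (fun t => by rw [q_bd z hz]) ?_
    rw [spin_bd z hz]
    funext i
    simp only [sy, Pi.smul_apply, smul_eq_mul]
    ring
  have hub : ∀ z : Dk, ‖z.1‖ = 1 → u z = ((ip (u one') (u one'))⁻¹ * ip (u one') (u z)) • u one' := by
    intro z hz
    obtain ⟨y, hy⟩ := exists_spinor (f (q one'))
    have h1 := huf' z
    rw [q_bd z hz] at h1
    obtain ⟨a, ha⟩ := hy.fixed h1
    obtain ⟨b, hb⟩ := hy.fixed (huf' one')
    have hb0 : b ≠ 0 := by rintro rfl; exact hun one' (by simpa using hb)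
    have hab : u z = (a / b) • u one' := by rw [ha, hb, smul_smul, div_mul_cancel₀ _ hb0]
    have hne := ip_self_ne (hun one')
    rw [hab, ip_smul]
    congr 1
    field_simp
  let c : Dk → ℂ := fun z => (ip (u one') (u one'))⁻¹ * ip (u one') (u z)
  have hc : Continuous c := by simp only [c, ip]; fun_prop
  let g : Dk → ℂ := fun z => ip (sy (u z) (u z)) (v z)
  have hg : Continuous g := by simp only [g, ip, sy]; fun_prop
  have hgn : ∀ z, g z ≠ 0 := by
    intro z
    obtain ⟨y, hy⟩ := exists_spinor (f (q z))
    obtain ⟨a, ha⟩ := hy.fixed (huf' z)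
    obtain ⟨b, hb⟩ := (symB_rk hy hy).fixed (hvf' z)
    have ha0 : a ≠ 0 := by rintro rfl; exact hun z (by simpa using ha)
    have hsy : sy (u z) (u z) = (a ^ 2) • sy y y := by
      rw [ha]; funext i; simp only [sy, Pi.smul_apply, smul_eq_mul]; ring
    have hvz : v z = (b / a ^ 2) • sy (u z) (u z) := by
      rw [hsy, smul_smul, div_mul_cancel₀ _ (pow_ne_zero 2 ha0)]; exact hb
    have hb0 : b / a ^ 2 ≠ 0 := by
      intro h0; rw [h0, zero_smul] at hvz; exact hvn z hvz
    simp only [g]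
    rw [hvz, ip_smul]
    exact mul_ne_zero hb0 (ip_self_ne (sy_ne (hun z) (hun z)))
  have hgb : ∀ z : Dk, ‖z.1‖ = 1 → g z = (conj (c z)) ^ 2 * z.1 * g one' := by
    intro z hz
    have h1 : u z = c z • u one' := hub z hz
    simp only [g]
    rw [hvb z hz, ip_smul]
    have hsy : sy (u z) (u z) = (c z ^ 2) • sy (u one') (u one') := by
      rw [h1]; funext i; simp only [sy, Pi.smul_apply, smul_eq_mul]; ring
    rw [hsy]
    simp only [ip, Pi.smul_apply, smul_eq_mul, map_mul, map_pow, Finset.mul_sum]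
    exact Finset.sum_congr rfl fun _ _ => by ring
  refine no_root (fun z => g (ret z) / g one') (fun z => conj (c (ret z)))
    ((hg.comp continuous_ret).div_const _) (Complex.continuous_conj.comp (hc.comp continuous_ret))
    (fun z => div_ne_zero (hgn _) (hgn _)) (fun z hz => ?_)
  have hz' := ret_bd z hz
  rw [hgb (ret z) (by rw [hz', hz]), mul_div_cancel_right₀ _ (hgn _), hz']
end

section
/- Let S² be the unit sphere in three-dimensional Euclidean space, fix x₀ ∈ S², and let Φ₀ : S² → Sym2 S² be the continuous map Φ₀(x) = ⟦(x, x₀)⟧. Then every continuous map φ : S² → Sym2 S² that is homotopic to Φ₀ meets the antipodal set: there exist x ∈ S² and p ∈ S² such that φ(x) = ⟦(p, −p)⟧. -/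
open scoped Matrix unitInterval
open Filter Topology

namespace AntipodalProof

/-- Transport along a homotopy of idempotents. -/
lemma transport {n X : Type*} [Fintype n] [DecidableEq n] [TopologicalSpace X] [CompactSpace X]
    (F : I → X → Matrix n n ℂ) (hF : Continuous (fun q : I × X => F q.1 q.2))
    (hid : ∀ t x, F t x * F t x = F t x) (s t : I) :
    ∃ a : X → Matrix n n ℂ, Continuous a ∧
      ∀ x, F t x * a x = a x ∧ ∃ b, b * a x = F s x := by
  refine PreconnectedSpace.induction₂' (fun s t : I => ∃ a : X → Matrix n n ℂ, Continuous a ∧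
      ∀ x, F t x * a x = a x ∧ ∃ b, b * a x = F s x) ?_ ?_ s t
  · intro s
    have key : ∀ (e f : Matrix n n ℂ), e * e = e → f * f = f → (1 - e + e * f * e).det ≠ 0 →
        f * (f * e) = f * e ∧ ∃ b, b * (f * e) = e := by
      intro e f he hf hdet
      refine ⟨by rw [← mul_assoc, hf], (1 - e + e * f * e)⁻¹ * e, ?_⟩
      have h1 : e * (f * e) = (1 - e + e * f * e) * e := by
        simp only [add_mul, sub_mul, one_mul, mul_assoc, he, sub_self, zero_add]
      rw [mul_assoc, h1, Matrix.nonsing_inv_mul_cancel_left _ _ (isUnit_iff_ne_zero.2 hdet)]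
    have hFs : ∀ s, Continuous (F s) := fun s => hF.comp (Continuous.prodMk_right s)
    have hs : Continuous (fun q : I × X => F s q.2) := (hFs s).comp continuous_snd
    have h1 : ∀ᶠ t in 𝓝 s, ∀ x ∈ (Set.univ : Set X),
        (1 - F s x + F s x * F t x * F s x).det ≠ 0 := by
      refine isCompact_univ.eventually_forall_of_forall_eventually ?_
      intro x _
      have hc : Continuous (fun q : I × X =>
          (1 - F s q.2 + F s q.2 * F q.1 q.2 * F s q.2).det) := by fun_prop
      refine hc.continuousAt.eventually_ne ?_
      simp [hid]
    have h2 : ∀ᶠ t in 𝓝 s, ∀ x ∈ (Set.univ : Set X),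
        (1 - F t x + F t x * F s x * F t x).det ≠ 0 := by
      refine isCompact_univ.eventually_forall_of_forall_eventually ?_
      intro x _
      have hc : Continuous (fun q : I × X =>
          (1 - F q.1 q.2 + F q.1 q.2 * F s q.2 * F q.1 q.2).det) := by fun_prop
      refine hc.continuousAt.eventually_ne ?_
      simp [hid]
    filter_upwards [h1, h2] with t ht1 ht2
    exact ⟨⟨fun x => F t x * F s x, (hFs t).mul (hFs s), fun x =>
        key _ _ (hid s x) (hid t x) (ht1 x trivial)⟩,
      ⟨fun x => F s x * F t x, (hFs s).mul (hFs t), fun x =>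
        key _ _ (hid t x) (hid s x) (ht2 x trivial)⟩⟩
  · refine ⟨?_⟩
    rintro r s t ⟨a, ha, h⟩ ⟨a', ha', h'⟩
    refine ⟨fun x => a' x * a x, ha'.mul ha, fun x => ⟨?_, ?_⟩⟩
    · rw [← mul_assoc, (h' x).1]
    · obtain ⟨b, hb⟩ := (h x).2
      obtain ⟨b', hb'⟩ := (h' x).2
      refine ⟨b * b', ?_⟩
      rw [mul_assoc, ← mul_assoc b', hb', (h x).1, hb]

/-- Transport of square roots along a homotopy of nowhere zero functions. -/
lemma sqrt_transport {X : Type*} [TopologicalSpace X] [CompactSpace X]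
    (F : I → X → ℂ) (hF : Continuous (fun q : I × X => F q.1 q.2))
    (hne : ∀ t x, F t x ≠ 0) (s t : I) :
    ∃ g : X → ℂ, Continuous g ∧ ∀ x, F t x = F s x * g x ^ 2 := by
  refine PreconnectedSpace.induction₂' (fun s t : I => ∃ g : X → ℂ, Continuous g ∧
      ∀ x, F t x = F s x * g x ^ 2) ?_ ?_ s t
  · intro s
    have hFs : ∀ s, Continuous (F s) := fun s => hF.comp (Continuous.prodMk_right s)
    have hs : Continuous (fun q : I × X => F s q.2) := (hFs s).comp continuous_snd
    have key : ∀ f g : X → ℂ, Continuous f → Continuous g → (∀ x, f x ≠ 0) →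
        (∀ x, g x / f x ∈ Complex.slitPlane) →
        ∃ k : X → ℂ, Continuous k ∧ ∀ x, g x = f x * k x ^ 2 := by
      intro f g hf hg hf0 h
      refine ⟨fun x => (g x / f x) ^ (1 / 2 : ℂ), ?_, ?_⟩
      · exact (hg.div hf hf0).cpow continuous_const h
      · intro x
        have := Complex.cpow_nat_inv_pow (g x / f x) (n := 2) (by norm_num)
        have h2 : ((g x / f x) ^ (1 / 2 : ℂ)) ^ 2 = g x / f x := by
          simp
        simp only [h2]
        field_simp [hf0 x]
    have h1 : ∀ᶠ t in 𝓝 s, ∀ x ∈ (Set.univ : Set X), F t x / F s x ∈ Complex.slitPlane := by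
      refine isCompact_univ.eventually_forall_of_forall_eventually ?_
      intro x _
      have hc : Continuous (fun q : I × X => F q.1 q.2 / F s q.2) := hF.div hs (fun q => hne _ _)
      refine hc.continuousAt.eventually_mem (Complex.isOpen_slitPlane.mem_nhds ?_)
      simp [hne]
    have h2 : ∀ᶠ t in 𝓝 s, ∀ x ∈ (Set.univ : Set X), F s x / F t x ∈ Complex.slitPlane := by
      refine isCompact_univ.eventually_forall_of_forall_eventually ?_
      intro x _
      have hc : Continuous (fun q : I × X => F s q.2 / F q.1 q.2) := hs.div hF (fun q => hne _ _)
      refine hc.continuousAt.eventually_mem (Complex.isOpen_slitPlane.mem_nhds ?_)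
      simp [hne]
    filter_upwards [h1, h2] with t ht1 ht2
    exact ⟨key _ _ (hFs s) (hFs t) (hne s) (fun x => ht1 x trivial),
      key _ _ (hFs t) (hFs s) (hne t) (fun x => ht2 x trivial)⟩
  · refine ⟨?_⟩
    rintro r s t ⟨a, ha, h⟩ ⟨a', ha', h'⟩
    refine ⟨fun x => a x * a' x, ha.mul ha', fun x => ?_⟩
    rw [h', h]; ring

lemma no_sqrt (r : Circle → ℂ) (hr : Continuous r) (h : ∀ z, r z ^ 2 = z) : False := by
  let f : ℝ → ℂ := fun t => r (Circle.exp t) * Complex.exp (-(t / 2 * Complex.I))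
  have hf : Continuous f := by
    have : Continuous fun t : ℝ => r (Circle.exp t) := hr.comp (Circle.exp.continuous)
    fun_prop
  have hf2 : ∀ t, f t ^ 2 = 1 := by
    intro t
    simp only [f, mul_pow, h, Circle.coe_exp, ← Complex.exp_nat_mul, ← Complex.exp_add]
    rw [Complex.exp_eq_one_iff]
    exact ⟨0, by push_cast; ring⟩
  have h0 : f (2 * Real.pi) = - f 0 := by
    have : (Complex.exp (-(((2 * Real.pi : ℝ) : ℂ) / 2 * Complex.I))) = -1 := by
      rw [Complex.exp_neg]
      have : (((2 * Real.pi : ℝ) : ℂ) / 2 * Complex.I) = Real.pi * Complex.I := by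
        push_cast; ring
      rw [this, Complex.exp_pi_mul_I]; norm_num
    simp only [f, this, Circle.exp_two_pi]
    simp
  have hre : ∀ t, f t = 1 ∨ f t = -1 := fun t => by simpa using hf2 t
  have hg : Continuous fun t => (f t).re := Complex.continuous_re.comp hf
  have hz : (0 : ℝ) ∈ Set.range fun t => (f t).re := by
    rcases hre 0 with h1 | h1
    · exact mem_range_of_exists_le_of_exists_ge hg ⟨2 * Real.pi, by simp [h0, h1]⟩
        ⟨0, by simp [h1]⟩
    · exact mem_range_of_exists_le_of_exists_ge hg ⟨0, by simp [h1]⟩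
        ⟨2 * Real.pi, by simp [h0, h1]⟩
  obtain ⟨t, ht⟩ := hz
  rcases hre t with h1 | h1 <;> simp [h1] at ht

lemma rank_one {n : Type*} [Fintype n] (A : Matrix n n ℂ) (w : n → ℂ)
    (hA : ∀ i j, A i j = w i * star (w j)) (hw : w ≠ 0) :
    A.trace ≠ 0 ∧ (A.trace⁻¹ • A) * (A.trace⁻¹ • A) = A.trace⁻¹ • A ∧
      (A.trace⁻¹ • A) *ᵥ w = w ∧ ∀ v, ∃ k : ℂ, (A.trace⁻¹ • A) *ᵥ v = k • w := by
  have hA' : A = Matrix.vecMulVec w (star w) := by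
    ext i j; simp [hA, Matrix.vecMulVec_apply]
  have htr : A.trace = star w ⬝ᵥ w := by
    rw [hA', Matrix.trace_vecMulVec, dotProduct_comm]
  have hne : A.trace ≠ 0 := by
    rw [htr]
    open scoped ComplexOrder in
    exact fun h => hw (dotProduct_star_self_eq_zero.1 h)
  refine ⟨hne, ?_, ?_, ?_⟩
  · have : A * A = A.trace • A := by
      rw [htr, hA', Matrix.vecMulVec_mul_vecMulVec]
      ext i j; simp [Matrix.vecMulVec_apply]; ring
    rw [Matrix.smul_mul, Matrix.mul_smul, this, smul_smul A.trace⁻¹ A.trace,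
      inv_mul_cancel₀ hne, one_smul]
  · have : A *ᵥ w = A.trace • w := by
      rw [htr, hA', Matrix.vecMulVec_mulVec]; ext; simp [mul_comm]
    rw [Matrix.smul_mulVec, this, smul_smul, inv_mul_cancel₀ hne, one_smul]
  · intro v
    refine ⟨A.trace⁻¹ * (star w ⬝ᵥ v), ?_⟩
    rw [Matrix.smul_mulVec, mul_smul]
    congr 1
    rw [hA', Matrix.vecMulVec_mulVec]; ext; simp [mul_comm]

abbrev V := EuclideanSpace ℝ (Fin 3)

/-- `‖y‖ + y · sigma`. -/
noncomputable def P (y : V) : Matrix (Fin 2) (Fin 2) ℂ :=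
  !![((‖y‖ + y 2 : ℝ) : ℂ), (y 0 : ℂ) - Complex.I * (y 1 : ℂ);
    (y 0 : ℂ) + Complex.I * (y 1 : ℂ), ((‖y‖ - y 2 : ℝ) : ℂ)]

lemma continuous_P : Continuous P := by
  unfold P
  refine continuous_matrix ?_
  intro i j
  fin_cases i <;> fin_cases j <;> simp <;> fun_prop

lemma norm_sq (y : V) : ‖y‖ ^ 2 = y 0 ^ 2 + y 1 ^ 2 + y 2 ^ 2 := by
  rw [EuclideanSpace.norm_sq_eq, Fin.sum_univ_three]; simp

lemma exists_spinor (y : V) : ∃ u : Fin 2 → ℂ, ∀ i j, P y i j = u i * star (u j) := by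
  have hn := norm_sq y
  have h0 := norm_nonneg y
  have hle : 0 ≤ ‖y‖ + y 2 := by
    have := abs_le.1 <| abs_le_of_sq_le_sq (a := y 2) (b := ‖y‖) (by nlinarith [sq_nonneg (y 0), sq_nonneg (y 1)]) h0
    linarith [this.1]
  have hle' : 0 ≤ ‖y‖ - y 2 := by
    have := abs_le.1 <| abs_le_of_sq_le_sq (a := y 2) (b := ‖y‖) (by nlinarith [sq_nonneg (y 0), sq_nonneg (y 1)]) h0
    linarith [this.2]
  by_cases hz : ‖y‖ + y 2 = 0
  · have hs : y 0 ^ 2 + y 1 ^ 2 = 0 := by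
      have : y 2 = -‖y‖ := by linarith
      rw [this] at hn; linarith
    have hy0 : y 0 = 0 := by nlinarith [sq_nonneg (y 0), sq_nonneg (y 1)]
    have hy1 : y 1 = 0 := by nlinarith [sq_nonneg (y 0), sq_nonneg (y 1)]
    refine ⟨![0, (Real.sqrt (‖y‖ - y 2) : ℂ)], ?_⟩
    intro i j
    have : ((Real.sqrt (‖y‖ - y 2) : ℂ)) * (Real.sqrt (‖y‖ - y 2) : ℂ) = ((‖y‖ - y 2 : ℝ) : ℂ) := by
      rw [← Complex.ofReal_mul, Real.mul_self_sqrt hle']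
    fin_cases i <;> fin_cases j <;> simp [P, hy0, hy1]
    · exact_mod_cast hz
    · rw [this]; simp
  · have hr : 0 < Real.sqrt (‖y‖ + y 2) := Real.sqrt_pos.2 (lt_of_le_of_ne hle (Ne.symm hz))
    have hr2 := Real.mul_self_sqrt hle
    set r := Real.sqrt (‖y‖ + y 2)
    have hrc : (r : ℂ) ≠ 0 := by exact_mod_cast hr.ne'
    refine ⟨![(r : ℂ), ((y 0 : ℂ) + Complex.I * (y 1 : ℂ)) / r], ?_⟩
    intro i j
    fin_cases i <;> fin_cases j <;> simp [P]
    · exact_mod_cast hr2.symm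
    · field_simp
      ring
    · field_simp
    · field_simp
      have : (‖y‖ - y 2) * r ^ 2 = y 0 ^ 2 + y 1 ^ 2 := by
        rw [pow_two, hr2]; nlinarith
      have h2 : ((‖y‖ : ℂ) - y 2) * (r : ℂ) ^ 2 = (y 0 : ℂ) ^ 2 + (y 1 : ℂ) ^ 2 := by
        exact_mod_cast this
      rw [h2]
      ring_nf
      simp
      
/-- A chosen spinor. -/
noncomputable def u (y : V) : Fin 2 → ℂ := (exists_spinor y).choose

lemma u_spec (y : V) (i j : Fin 2) : P y i j = u y i * star (u y j) :=
  (exists_spinor y).choose_spec i j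

lemma spinor_ne {y : V} (hy : y ≠ 0) (w : Fin 2 → ℂ)
    (hw : ∀ i j, P y i j = w i * star (w j)) : w ≠ 0 := by
  rintro rfl
  have h1 := hw 0 0
  have h2 := hw 1 1
  simp [P] at h1 h2
  have h3 : (‖y‖ : ℂ) = 0 := by linear_combination (h1 + h2) / 2
  apply hy
  simpa using h3

lemma spinor_dot (y p : V) (h : 0 < ‖y‖ * ‖p‖ + (y 0 * p 0 + y 1 * p 1 + y 2 * p 2)) :
    star (u y 0) * u p 0 + star (u y 1) * u p 1 ≠ 0 := by
  intro h0
  have h1 : (star (u y 0) * u p 0 + star (u y 1) * u p 1) *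
      star (star (u y 0) * u p 0 + star (u y 1) * u p 1) =
      P y 0 0 * P p 0 0 + P y 1 0 * P p 0 1 + P y 0 1 * P p 1 0 + P y 1 1 * P p 1 1 := by
    simp only [u_spec, star_add, star_mul', star_star]; ring
  rw [h0, zero_mul] at h1
  have h2 : ((2 * (‖y‖ * ‖p‖ + (y 0 * p 0 + y 1 * p 1 + y 2 * p 2)) : ℝ) : ℂ) = 0 := by
    rw [h1]
    simp [P]
    ring_nf
    simp
  have h3 := Complex.ofReal_eq_zero.1 h2
  linarith

/-- Symmetrized product of spinors. -/
def W (a b : Fin 2 → ℂ) : Fin 2 × Fin 2 → ℂ := fun i => a i.1 * b i.2 + a i.2 * b i.1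

lemma W_ne {a b : Fin 2 → ℂ} (ha : a ≠ 0) (hb : b ≠ 0) : W a b ≠ 0 := by
  intro h
  have h00 := congrFun h (0, 0)
  have h11 := congrFun h (1, 1)
  have h01 := congrFun h (0, 1)
  simp only [W, Pi.zero_apply] at h00 h11 h01
  have e0 : a 0 * b 0 = 0 := by linear_combination h00 / 2
  have e1 : a 1 * b 1 = 0 := by linear_combination h11 / 2
  have ha' : ¬ (a 0 = 0 ∧ a 1 = 0) := fun h => ha (by ext i; fin_cases i <;> simp [h])
  have hb' : ¬ (b 0 = 0 ∧ b 1 = 0) := fun h => hb (by ext i; fin_cases i <;> simp [h])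
  rcases mul_eq_zero.1 e0 with h | h <;> rcases mul_eq_zero.1 e1 with h' | h' <;>
    simp_all

/-- Symmetrized product of matrices. -/
def Q (A B : Matrix (Fin 2) (Fin 2) ℂ) : Matrix (Fin 2 × Fin 2) (Fin 2 × Fin 2) ℂ :=
  fun i k => A i.1 k.1 * B i.2 k.2 + A i.2 k.1 * B i.1 k.2 + A i.1 k.2 * B i.2 k.1 +
    A i.2 k.2 * B i.1 k.1

lemma Q_symm (A B) : Q A B = Q B A := by
  ext i j; simp only [Q]; ring

lemma Q_spec {A B : Matrix (Fin 2) (Fin 2) ℂ} {a b : Fin 2 → ℂ}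
    (ha : ∀ i j, A i j = a i * star (a j)) (hb : ∀ i j, B i j = b i * star (b j)) (i j) :
    Q A B i j = W a b i * star (W a b j) := by
  simp only [Q, W, ha, hb, star_add, star_mul']; ring

lemma continuous_Q : Continuous (fun q : Matrix (Fin 2) (Fin 2) ℂ × Matrix (Fin 2) (Fin 2) ℂ =>
    Q q.1 q.2) := by
  refine continuous_matrix ?_
  intro i j
  simp only [Q]
  fun_prop

/-- The projection associated with an unordered pair. -/
noncomputable def Qs : Sym2 S2 → Matrix (Fin 2 × Fin 2) (Fin 2 × Fin 2) ℂ :=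
  Sym2.lift ⟨fun p q => (Q (P p) (P q)).trace⁻¹ • Q (P p) (P q), fun p q => by
    simp only [Q_symm (P p) (P q)]⟩

lemma S2_ne (p : S2) : (p : V) ≠ 0 := by
  intro h
  have := p.2
  simp [h] at this

lemma Qs_spec (p q : S2) {a b : Fin 2 → ℂ} (ha : ∀ i j, P p i j = a i * star (a j))
    (hb : ∀ i j, P q i j = b i * star (b j)) :
    Qs s(p, q) * Qs s(p, q) = Qs s(p, q) ∧ Qs s(p, q) *ᵥ W a b = W a b ∧
      ∀ v, ∃ k : ℂ, Qs s(p, q) *ᵥ v = k • W a b :=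
  (rank_one (Q (P p) (P q)) (W a b) (Q_spec ha hb)
    (W_ne (spinor_ne (S2_ne p) a ha) (spinor_ne (S2_ne q) b hb))).2

lemma continuous_Qs : Continuous Qs := by
  refine continuous_coinduced_dom.2 ?_
  have hQ : Continuous fun q : S2 × S2 => Q (P q.1) (P q.2) :=
    continuous_Q.comp (((continuous_P.comp continuous_subtype_val).comp continuous_fst).prodMk
      ((continuous_P.comp continuous_subtype_val).comp continuous_snd))
  have : Continuous fun q : S2 × S2 => (Q (P q.1) (P q.2)).trace⁻¹ • Q (P q.1) (P q.2) := by
    refine Continuous.smul (Continuous.inv₀ hQ.matrix_trace ?_) hQ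
    intro q
    exact (rank_one _ _ (Q_spec (u_spec q.1) (u_spec q.2))
      (W_ne (spinor_ne (S2_ne q.1) _ (u_spec q.1)) (spinor_ne (S2_ne q.2) _ (u_spec q.2)))).1
  exact this

/-- The sum of an unordered pair. -/
noncomputable def msum : Sym2 S2 → V :=
  Sym2.lift ⟨fun p q => (p : V) + q, fun _ _ => add_comm _ _⟩

lemma continuous_msum : Continuous msum := by
  refine continuous_coinduced_dom.2 ?_
  have : Continuous fun q : S2 × S2 => (q.1 : V) + q.2 := by fun_prop
  exact this

lemma msum_pos (p q : S2) (h : (p : V) + q ≠ 0) :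
    0 < ‖(p : V) + q‖ * ‖(p : V)‖ + (((p : V) + q) 0 * (p : V) 0 + ((p : V) + q) 1 * (p : V) 1
      + ((p : V) + q) 2 * (p : V) 2) := by
  have hp : ‖(p : V)‖ = 1 := by simp
  have hq : ‖(q : V)‖ = 1 := by simp
  have h1 := norm_sq (p : V)
  have h2 := norm_sq (q : V)
  have h3 := norm_pos_iff.2 h
  rw [hp] at h1 ⊢
  rw [hq] at h2
  simp only [PiLp.add_apply]
  nlinarith [sq_nonneg ((p : V) 0 + (q : V) 0), sq_nonneg ((p : V) 1 + (q : V) 1),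
    sq_nonneg ((p : V) 2 + (q : V) 2)]

abbrev D := Metric.closedBall (0 : ℂ) 1

lemma D_sq (z : D) : (z : ℂ).re ^ 2 + (z : ℂ).im ^ 2 ≤ 1 := by
  have h : ‖(z : ℂ)‖ ≤ 1 := mem_closedBall_zero_iff.1 z.2
  have h2 := Complex.sq_norm (z : ℂ)
  rw [Complex.normSq_apply] at h2
  nlinarith [norm_nonneg (z : ℂ)]

/-- The height function. -/
noncomputable def ht (z : D) : ℝ := Real.sqrt (1 - ((z : ℂ).re ^ 2 + (z : ℂ).im ^ 2))

lemma ht_sq (z : D) : ht z * ht z = 1 - ((z : ℂ).re ^ 2 + (z : ℂ).im ^ 2) :=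
  Real.mul_self_sqrt (by linarith [D_sq z])

lemma continuous_ht : Continuous ht := by unfold ht; fun_prop

/-- The Hopf map on the disc. -/
noncomputable def hD (z : D) : S2 :=
  ⟨!₂[2 * (z : ℂ).re * ht z, - (2 * (z : ℂ).im * ht z),
    2 * ((z : ℂ).re ^ 2 + (z : ℂ).im ^ 2) - 1], by
    rw [mem_sphere_zero_iff_norm, ← sq_eq_sq₀ (norm_nonneg _) zero_le_one, norm_sq]
    simp
    linear_combination (4 * (z : ℂ).re ^ 2 + 4 * (z : ℂ).im ^ 2) * ht_sq z⟩

lemma continuous_hD : Continuous hD := by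
  unfold hD
  refine Continuous.subtype_mk ?_ _
  refine (PiLp.continuous_toLp 2 _).comp (continuous_pi ?_)
  intro i
  have := continuous_ht
  fin_cases i <;> simp <;> fun_prop

/-- The spinor on the disc. -/
noncomputable def v (z : D) : Fin 2 → ℂ :=
  ![(Real.sqrt 2 : ℂ) * z, (Real.sqrt 2 : ℂ) * (ht z : ℂ)]

lemma continuous_v : Continuous v := by
  refine continuous_pi ?_
  intro i
  have := continuous_ht
  fin_cases i <;> simp [v] <;> fun_prop

lemma v_spec (z : D) (i j : Fin 2) : P (hD z) i j = v z i * star (v z j) := by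
  have hn : ‖(hD z : V)‖ = 1 := by simp
  have h2 : (Real.sqrt 2 : ℂ) ^ 2 = 2 := by
    rw [← Complex.ofReal_pow, Real.sq_sqrt (by norm_num)]; simp
  have hh : (ht z : ℂ) ^ 2 = 1 - (((z : ℂ).re : ℂ) ^ 2 + ((z : ℂ).im : ℂ) ^ 2) := by
    have := ht_sq z
    rw [← pow_two] at this
    exact_mod_cast this
  have hzc : (starRingEnd ℂ) (z : ℂ) = ((z : ℂ).re : ℂ) - ((z : ℂ).im : ℂ) * Complex.I := by
    apply Complex.ext <;> simp
  have hz : (z : ℂ) = ((z : ℂ).re : ℂ) + ((z : ℂ).im : ℂ) * Complex.I := (Complex.re_add_im _).symm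
  have hzz : (z : ℂ) * (starRingEnd ℂ) (z : ℂ) =
      ((z : ℂ).re : ℂ) ^ 2 + ((z : ℂ).im : ℂ) ^ 2 := by
    rw [Complex.mul_conj, Complex.normSq_apply]; push_cast; ring
  simp only [P, hn]
  fin_cases i <;> fin_cases j <;> simp [v, hD]
  · linear_combination (-(z : ℂ) * (starRingEnd ℂ) (z : ℂ)) * h2 - 2 * hzz
  · linear_combination (-(z : ℂ) * (ht z : ℂ)) * h2 - 2 * (ht z : ℂ) * hz
  · linear_combination (-(starRingEnd ℂ) (z : ℂ) * (ht z : ℂ)) * h2 - 2 * (ht z : ℂ) * hzc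
  · linear_combination (-(ht z : ℂ) ^ 2) * h2 - 2 * hh

/-- Scaling on the disc. -/
def sc (t : I) (z : D) : D := ⟨(t : ℝ) * (z : ℂ), by
  have h : ‖(z : ℂ)‖ ≤ 1 := mem_closedBall_zero_iff.1 z.2
  rw [mem_closedBall_zero_iff, norm_mul, Complex.norm_real, Real.norm_of_nonneg t.2.1]
  exact mul_le_one₀ t.2.2 (norm_nonneg _) h⟩

lemma continuous_sc : Continuous (fun q : I × D => sc q.1 q.2) := by
  unfold sc
  refine Continuous.subtype_mk ?_ _
  fun_prop

lemma sc_one (z : D) : sc 1 z = z := by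
  apply Subtype.ext; simp [sc]

lemma sc_zero (z : D) : sc 0 z = sc 0 ⟨0, by simp⟩ := by
  apply Subtype.ext; simp [sc]

/-- Inclusion of the circle into the disc. -/
def ci (z : Circle) : D := ⟨z, mem_closedBall_zero_iff.2 (Circle.norm_coe z).le⟩

lemma continuous_ci : Continuous ci := by
  unfold ci; fun_prop

lemma ht_ci (z : Circle) : ht (ci z) = 0 := by
  have h2 := Complex.sq_norm (z : ℂ)
  rw [Complex.normSq_apply, Circle.norm_coe] at h2
  have h3 : 1 - ((z : ℂ).re ^ 2 + (z : ℂ).im ^ 2) = 0 := by linarith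
  simp [ht, ci, h3]

lemma hD_ci (z : Circle) : hD (ci z) = hD (ci 1) := by
  have h : ∀ z : Circle, (z : ℂ).re ^ 2 + (z : ℂ).im ^ 2 = 1 := by
    intro z
    have h2 := Complex.sq_norm (z : ℂ)
    rw [Complex.normSq_apply, Circle.norm_coe] at h2
    linarith
  apply Subtype.ext
  simp only [hD, ht_ci]
  simp only [ci, h]
  simp

lemma v_ci (z : Circle) : v (ci z) = (z : ℂ) • v (ci 1) := by
  ext i
  fin_cases i <;> simp [v, ht_ci] <;> simp [ci, mul_comm]

lemma W_smul (k : ℂ) (a b) : W (k • a) b = k • W a b := by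
  ext i; simp [W]; ring

theorem main (x₀ : S2) (Φ₀ φ : C(S2, Sym2 S2)) (hΦ₀ : ∀ x, Φ₀ x = s(x, x₀))
    (hφ : φ.Homotopic Φ₀) : ∃ x p : S2, φ x = s(p, -p) := by
  by_contra hno
  push Not at hno
  have hm : ∀ x, msum (φ x) ≠ 0 := by
    intro x h
    have := hno x
    generalize φ x = e at h this
    induction e with
    | _ p q =>
      have h' : (p : V) + q = 0 := h
      apply this p
      have : q = -p := Subtype.ext (by simpa using (neg_eq_of_add_eq_zero_right h').symm)
      rw [this]
  obtain ⟨H⟩ := hφ.symm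
  have Qid : ∀ e, Qs e * Qs e = Qs e := by
    intro e
    induction e with
    | _ p q => exact (Qs_spec p q (u_spec p) (u_spec q)).1
  obtain ⟨a, ha, ha'⟩ := transport (fun t x => Qs (H (t, x)))
    (continuous_Qs.comp H.continuous) (fun t x => Qid _) 0 1
  simp only [ContinuousMap.Homotopy.apply_one, ContinuousMap.Homotopy.apply_zero, hΦ₀] at ha'
  let W0 : D → Fin 2 × Fin 2 → ℂ := fun z => W (v z) (u x₀)
  have hW0 : ∀ z, W0 z ≠ 0 := fun z =>
    W_ne (spinor_ne (S2_ne (hD z)) _ (v_spec z)) (spinor_ne (S2_ne x₀) _ (u_spec x₀))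
  have hW0c : Continuous W0 := by
    refine continuous_pi ?_
    intro i
    have hv : ∀ i, Continuous fun z => v z i := fun i => (continuous_apply i).comp continuous_v
    exact ((hv _).mul continuous_const).add ((hv _).mul continuous_const)
  let τ : D → Fin 2 × Fin 2 → ℂ := fun z => a (hD z) *ᵥ W0 z
  have hτc : Continuous τ := (ha.comp continuous_hD).matrix_mulVec hW0c
  have hτ0 : ∀ z, τ z ≠ 0 := by
    intro z h
    obtain ⟨b, hb⟩ := (ha' (hD z)).2
    apply hW0 z
    calc W0 z = Qs s(hD z, x₀) *ᵥ W0 z := ((Qs_spec _ _ (v_spec z) (u_spec x₀)).2.1).symm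
      _ = b *ᵥ τ z := by rw [← hb, ← Matrix.mulVec_mulVec]
      _ = 0 := by rw [h, Matrix.mulVec_zero]
  have hτQ : ∀ z, Qs (φ (hD z)) *ᵥ τ z = τ z := by
    intro z
    simp only [τ, Matrix.mulVec_mulVec, (ha' (hD z)).1]
  have hτci : ∀ z : Circle, τ (ci z) = (z : ℂ) • τ (ci 1) := by
    intro z
    simp only [τ, W0]
    rw [hD_ci z, v_ci z, W_smul, Matrix.mulVec_smul]
  let mm : D → V := fun z => msum (φ (hD z))
  have hmm0 : ∀ z, mm z ≠ 0 := fun z => hm _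
  have hmmc : Continuous mm := continuous_msum.comp (φ.continuous.comp continuous_hD)
  have hP := fun y : {y : V // y ≠ 0} =>
    rank_one (P y.1) (u y.1) (u_spec y.1) (spinor_ne y.2 _ (u_spec y.1))
  let N : D → Matrix (Fin 2) (Fin 2) ℂ := fun z => (P (mm z)).trace⁻¹ • P (mm z)
  have hNc : Continuous N := by
    have h1 := continuous_P.comp hmmc
    exact Continuous.smul (Continuous.inv₀ h1.matrix_trace (fun z => (hP ⟨_, hmm0 z⟩).1)) h1
  obtain ⟨a2, ha2, ha2'⟩ := transport (fun t z => N (sc t z)) (hNc.comp continuous_sc)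
    (fun t z => (hP ⟨_, hmm0 _⟩).2.1) 0 1
  let d0 : D := sc 0 ⟨0, by simp⟩
  have ha2'' : ∀ z, N z * a2 z = a2 z ∧ ∃ b, b * a2 z = N d0 := by
    intro z
    have := ha2' z
    rwa [sc_one, sc_zero] at this
  let s : D → Fin 2 → ℂ := fun z => a2 z *ᵥ u (mm d0)
  have hsc : Continuous s := ha2.matrix_mulVec continuous_const
  have hs0 : ∀ z, s z ≠ 0 := by
    intro z h
    obtain ⟨b, hb⟩ := (ha2'' z).2
    apply spinor_ne (hmm0 d0) _ (u_spec _)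
    calc u (mm d0) = N d0 *ᵥ u (mm d0) := ((hP ⟨_, hmm0 d0⟩).2.2.1).symm
      _ = b *ᵥ s z := by rw [← hb, ← Matrix.mulVec_mulVec]
      _ = 0 := by rw [h, Matrix.mulVec_zero]
  have hsN : ∀ z, N z *ᵥ s z = s z := by
    intro z
    simp only [s, Matrix.mulVec_mulVec, (ha2'' z).1]
  have hsk : ∀ z, ∃ k : ℂ, k ≠ 0 ∧ s z = k • u (mm z) := by
    intro z
    obtain ⟨k, hk⟩ := (hP ⟨_, hmm0 z⟩).2.2.2 (s z)
    have hk' : s z = k • u (mm z) := (hsN z).symm.trans hk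
    refine ⟨k, ?_, hk'⟩
    rintro rfl
    exact hs0 z (by simpa using hk')
  let c : D → ℂ := fun z => ∑ i : Fin 2, ∑ j : Fin 2, star (s z i) * star (s z j) * τ z (i, j)
  have hs_i : ∀ i, Continuous fun z => s z i := fun i => (continuous_apply i).comp hsc
  have hτ_i : ∀ i, Continuous fun z => τ z i := fun i => (continuous_apply i).comp hτc
  have hcc : Continuous c := by
    refine continuous_finsetSum _ fun i _ => continuous_finsetSum _ fun j _ => ?_
    exact ((hs_i i).star.mul (hs_i j).star).mul (hτ_i (i, j))
  have hc0 : ∀ z, c z ≠ 0 := by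
    intro z
    obtain ⟨k', hk'0, hk'⟩ := hsk z
    have h1 := hτQ z
    have h2 := hτ0 z
    have h3 : mm z = msum (φ (hD z)) := rfl
    have h4 := hmm0 z
    rw [h3] at h4 hk'
    simp only [c, hk']
    generalize φ (hD z) = e at *
    induction e with
    | _ p q =>
      obtain ⟨k, hk⟩ := (Qs_spec p q (u_spec p) (u_spec q)).2.2 (τ z)
      rw [h1] at hk
      have hk0 : k ≠ 0 := by
        rintro rfl
        exact h2 (by simpa using hk)
      have hsum : msum s(p, q) = (p : V) + q := rfl
      rw [hsum] at *
      have e1 := spinor_dot _ _ (msum_pos p q h4)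
      have e2 := spinor_dot _ _ (msum_pos q p (by rwa [add_comm]))
      rw [add_comm (q : V)] at e2
      rw [hk]
      have : ∑ i : Fin 2, ∑ j : Fin 2, star ((k' • u ((p : V) + q)) i) *
          star ((k' • u ((p : V) + q)) j) * (k • W (u p) (u q)) (i, j) =
          2 * k * star k' ^ 2 *
          ((star (u ((p : V) + q) 0) * u p 0 + star (u ((p : V) + q) 1) * u p 1) *
          (star (u ((p : V) + q) 0) * u q 0 + star (u ((p : V) + q) 1) * u q 1)) := by
        simp only [Fin.sum_univ_two, Pi.smul_apply, smul_eq_mul, W, star_mul']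
        ring
      rw [this]
      have : star k' ≠ 0 := star_ne_zero.2 hk'0
      exact mul_ne_zero (mul_ne_zero (mul_ne_zero two_ne_zero hk0) (pow_ne_zero _ this))
        (mul_ne_zero e1 e2)
  obtain ⟨g, hg, hg'⟩ := sqrt_transport (fun t z => c (sc t z)) (hcc.comp continuous_sc)
    (fun t z => hc0 _) 0 1
  have hg'' : ∀ z, c z = c d0 * g z ^ 2 := by
    intro z
    have := hg' z
    rwa [sc_one, sc_zero] at this
  have hg0 : ∀ z, g z ≠ 0 := by
    intro z h
    exact hc0 z (by rw [hg'', h]; simp)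
  have hmmci : ∀ z, mm (ci z) = mm (ci 1) := by
    intro z; simp only [mm]; rw [hD_ci]
  let κ : Circle → ℂ := fun z => (star (s (ci 1)) ⬝ᵥ s (ci z)) / (star (s (ci 1)) ⬝ᵥ s (ci 1))
  have hκc : Continuous κ :=
    (continuous_const.dotProduct (hsc.comp continuous_ci)).div_const _
  have hden : star (s (ci 1)) ⬝ᵥ s (ci 1) ≠ 0 := by
    open scoped ComplexOrder in
    exact fun h => hs0 (ci 1) (dotProduct_star_self_eq_zero.1 h)
  have hκ : ∀ z, s (ci z) = κ z • s (ci 1) := by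
    intro z
    obtain ⟨k1, hk1, h1⟩ := hsk (ci 1)
    obtain ⟨k, hk, h2⟩ := hsk (ci z)
    have h3 : s (ci z) = (k / k1) • s (ci 1) := by
      rw [h2, h1, hmmci z, smul_smul, div_mul_cancel₀ _ hk1]
    have h4 : κ z = k / k1 := by
      simp only [κ]
      rw [h3, dotProduct_smul, smul_eq_mul, mul_div_assoc, div_self hden, mul_one]
    rw [h4, ← h3]
  have hκ0 : ∀ z, star (κ z) ≠ 0 := by
    intro z h
    rw [star_eq_zero] at h
    apply hs0 (ci z)
    rw [hκ, h, zero_smul]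
  have hcb : ∀ z : Circle, c (ci z) = z * star (κ z) ^ 2 * c (ci 1) := by
    intro z
    simp only [c, Fin.sum_univ_two, hτci z, hκ z, Pi.smul_apply, smul_eq_mul, star_mul']
    ring
  refine no_sqrt (fun z => g (ci z) / (star (κ z) * g (ci 1)))
    ((hg.comp continuous_ci).div (hκc.star.mul continuous_const)
      (fun z => mul_ne_zero (hκ0 z) (hg0 _))) ?_
  intro z
  have h1 := hcb z
  rw [hg'' (ci z), hg'' (ci 1)] at h1
  have h2 : g (ci z) ^ 2 = z * (star (κ z) * g (ci 1)) ^ 2 := by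
    apply mul_left_cancel₀ (hc0 d0)
    rw [h1]; ring
  rw [div_pow, h2, mul_div_assoc, div_self (pow_ne_zero _ (mul_ne_zero (hκ0 z) (hg0 _))), mul_one]

end AntipodalProof

/-- Every continuous map `φ : S² → Sym2 S²` homotopic to `Φ₀ : x ↦ ⟦(x, x₀)⟧` passes
through a pair of antipodal points. -/
theorem stmt_10 (x₀ : S2) (Φ₀ φ : C(S2, Sym2 S2)) (hΦ₀ : ∀ x, Φ₀ x = s(x, x₀))
    (hφ : φ.Homotopic Φ₀) : ∃ x p : S2, φ x = s(p, -p) :=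
  AntipodalProof.main x₀ Φ₀ φ hΦ₀ hφ
end

section
/- Let S² be the unit sphere in three-dimensional Euclidean space, fix x₀ ∈ S², and let Φ₀ : S² → Sym2 S² be the continuous map Φ₀(x) = ⟦(x, x₀)⟧. Let Ψ : S² → S² be a continuous map without fixed points (Ψ(p) ≠ p for every p ∈ S²), and let φ₁, φ₂ : S² → S² be continuous maps such that the map x ↦ ⟦(φ₁(x), φ₂(x))⟧ : S² → Sym2 S² is homotopic to Φ₀. Then there exists x ∈ S² with φ₂(x) = Ψ(φ₁(x)). -/
section Helpers
open Complex ComplexConjugate Topology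

/-- `(a₀, a₁)` is a spinor for `p`. -/
def Spin (p : S2) (a0 a1 : ℂ) : Prop :=
  a0 * conj a0 = 1 + ((p.1 2 : ℝ) : ℂ) ∧ a1 * conj a0 = ((p.1 0 : ℝ) : ℂ) + ((p.1 1 : ℝ) : ℂ) * I ∧
    a1 * conj a1 = 1 - ((p.1 2 : ℝ) : ℂ)

lemma S2_eq (p : S2) : p.1 0 ^ 2 + p.1 1 ^ 2 + p.1 2 ^ 2 = 1 := by
  have h := p.2
  rw [mem_sphere_zero_iff_norm, EuclideanSpace.norm_eq, Real.sqrt_eq_one] at h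
  simpa [Fin.sum_univ_three] using h

lemma exists_spin (p : S2) : ∃ a0 a1, Spin p a0 a1 := by
  have h := S2_eq p
  obtain ⟨x, hx⟩ : ∃ x, x = p.1 0 := ⟨_, rfl⟩
  obtain ⟨y, hy⟩ : ∃ x, x = p.1 1 := ⟨_, rfl⟩
  obtain ⟨z, hz⟩ : ∃ x, x = p.1 2 := ⟨_, rfl⟩
  unfold Spin
  rw [← hx, ← hy, ← hz] at h
  rw [← hx, ← hy, ← hz]
  clear hx hy hz
  by_cases hz1 : z = -1
  · have hx0 : x = 0 := by subst hz1; nlinarith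
    have hy0 : y = 0 := by subst hz1; nlinarith
    refine ⟨0, (Real.sqrt 2 : ℝ), ?_, ?_, ?_⟩
    · simp [hz1]
    · simp [hx0, hy0]
    · rw [conj_ofReal, ← ofReal_mul, Real.mul_self_sqrt (by norm_num), hz1]; push_cast; ring
  · have hpos : 0 < 1 + z := by
      have : -1 ≤ z := by nlinarith
      rcases lt_or_eq_of_le this with h | h
      · linarith
      · exact absurd h.symm hz1
    obtain ⟨r, hr⟩ : ∃ r, r = Real.sqrt (1 + z) := ⟨_, rfl⟩
    have hr0 : 0 < r := hr ▸ Real.sqrt_pos.2 hpos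
    have hr2 : r * r = 1 + z := hr ▸ Real.mul_self_sqrt hpos.le
    have hrc : (r : ℂ) ≠ 0 := by exact_mod_cast hr0.ne'
    have hr2c : (r : ℂ) * r = 1 + z := by exact_mod_cast hr2
    have hc : (x : ℂ) ^ 2 + y ^ 2 + z ^ 2 = 1 := by
      have := congrArg ofReal h
      push_cast at this
      exact this
    refine ⟨r, (x + y * I) / r, ?_, ?_, ?_⟩
    · rw [conj_ofReal, hr2c]
    · rw [conj_ofReal]; field_simp
    · simp only [map_div₀, map_add, map_mul, conj_ofReal, conj_I]
      field_simp
      rw [pow_two, hr2c]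
      linear_combination hc - y ^ 2 * I_sq

/-- The transport operator attached to a pair of points. -/
def TfunAux (P00 P01 P10 P11 Q00 Q01 Q10 Q11 : ℂ) (m : ℂ × ℂ × ℂ) : ℂ × ℂ × ℂ :=
  (2 * (P00 * m.1 * Q00 + P00 * m.2.1 * Q01 + P01 * m.2.1 * Q00 + P01 * m.2.2 * Q01),
   (P00 * m.1 * Q10 + P00 * m.2.1 * Q11 + P01 * m.2.1 * Q10 + P01 * m.2.2 * Q11) +
   (Q00 * m.1 * P10 + Q00 * m.2.1 * P11 + Q01 * m.2.1 * P10 + Q01 * m.2.2 * P11),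
   2 * (P10 * m.1 * Q10 + P10 * m.2.1 * Q11 + P11 * m.2.1 * Q10 + P11 * m.2.2 * Q11))

noncomputable def al (p : S2) : ℂ := 1 + ((p.1 2 : ℝ) : ℂ)
noncomputable def be (p : S2) : ℂ := ((p.1 0 : ℝ) : ℂ) + ((p.1 1 : ℝ) : ℂ) * I
noncomputable def de (p : S2) : ℂ := 1 - ((p.1 2 : ℝ) : ℂ)

@[fun_prop] lemma continuous_al : Continuous al := by unfold al; fun_prop
@[fun_prop] lemma continuous_be : Continuous be := by unfold be; fun_prop
@[fun_prop] lemma continuous_de : Continuous de := by unfold de; fun_prop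

noncomputable def Tpair (p q : S2) : (ℂ × ℂ × ℂ) →L[ℂ] (ℂ × ℂ × ℂ) :=
  LinearMap.toContinuousLinearMap
  { toFun := TfunAux (al p) (conj (be p)) (be p) (de p) (al q) (conj (be q)) (be q) (de q)
    map_add' := by
      intro m n
      simp only [TfunAux, Prod.fst_add, Prod.snd_add, Prod.mk_add_mk, Prod.mk.injEq]
      refine ⟨by ring, by ring, by ring⟩
    map_smul' := by
      intro c m
      simp only [TfunAux, Prod.smul_fst, Prod.smul_snd, Prod.smul_mk, Prod.mk.injEq, smul_eq_mul,
        RingHom.id_apply]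
      refine ⟨by ring, by ring, by ring⟩ }

lemma Tpair_apply (p q : S2) (m : ℂ × ℂ × ℂ) : Tpair p q m =
    TfunAux (al p) (conj (be p)) (be p) (de p) (al q) (conj (be q)) (be q) (de q) m := rfl

lemma Tpair_comm (p q : S2) : Tpair p q = Tpair q p := by
  refine ContinuousLinearMap.ext fun m => ?_
  simp only [Tpair_apply, TfunAux, Prod.mk.injEq]
  refine ⟨by ring, by ring, by ring⟩

lemma continuous_Tpair : Continuous (fun x : S2 × S2 => Tpair x.1 x.2) := by
  rw [continuous_clm_apply]
  intro m
  simp only [Tpair_apply, TfunAux]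
  have hc : Continuous (fun z : ℂ => conj z) := continuous_conj
  fun_prop

noncomputable def TS (σ : Sym2 S2) : (ℂ × ℂ × ℂ) →L[ℂ] (ℂ × ℂ × ℂ) :=
  Sym2.lift ⟨Tpair, Tpair_comm⟩ σ

lemma TS_mk (p q : S2) : TS s(p, q) = Tpair p q := rfl

lemma continuous_mkSym : Continuous (fun x : S2 × S2 => (s(x.1, x.2) : Sym2 S2)) :=
  continuous_quot_mk

lemma continuous_TS : Continuous TS :=
  continuous_quot_lift _ continuous_Tpair

def symv (c a0 a1 b0 b1 : ℂ) : ℂ × ℂ × ℂ :=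
  (c * (2 * a0 * b0), c * (a0 * b1 + a1 * b0), c * (2 * a1 * b1))

def InL (σ : Sym2 S2) (m : ℂ × ℂ × ℂ) : Prop :=
  ∃ p q a0 a1 b0 b1 c, σ = s(p, q) ∧ Spin p a0 a1 ∧ Spin q b0 b1 ∧ m = symv c a0 a1 b0 b1

lemma Tpair_spin {p q : S2} {a0 a1 b0 b1 : ℂ} (ha : Spin p a0 a1) (hb : Spin q b0 b1)
    (m : ℂ × ℂ × ℂ) : Tpair p q m =
      symv (conj a0 * m.1 * conj b0 + conj a0 * m.2.1 * conj b1 + conj a1 * m.2.1 * conj b0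
        + conj a1 * m.2.2 * conj b1) a0 a1 b0 b1 := by
  have e1 : al p = a0 * conj a0 := ha.1.symm
  have e2 : be p = a1 * conj a0 := ha.2.1.symm
  have e3 : de p = a1 * conj a1 := ha.2.2.symm
  have f1 : al q = b0 * conj b0 := hb.1.symm
  have f2 : be q = b1 * conj b0 := hb.2.1.symm
  have f3 : de q = b1 * conj b1 := hb.2.2.symm
  simp only [Tpair_apply, TfunAux, symv, e1, e2, e3, f1, f2, f3, map_mul, conj_conj, Prod.mk.injEq]
  refine ⟨by ring, by ring, by ring⟩

lemma TS_mem (σ : Sym2 S2) (m : ℂ × ℂ × ℂ) : InL σ (TS σ m) := by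
  induction σ using Sym2.ind with
  | _ p q =>
    obtain ⟨a0, a1, ha⟩ := exists_spin p
    obtain ⟨b0, b1, hb⟩ := exists_spin q
    exact ⟨p, q, a0, a1, b0, b1, _, rfl, ha, hb, by rw [TS_mk, Tpair_spin ha hb]⟩

lemma spin_sum {p : S2} {a0 a1 : ℂ} (ha : Spin p a0 a1) : a0 * conj a0 + a1 * conj a1 = 2 := by
  rw [ha.1, ha.2.2]; ring

lemma TS_of_mem {σ : Sym2 S2} {m : ℂ × ℂ × ℂ} (h : InL σ m) :
    ∃ k : ℝ, 4 ≤ k ∧ TS σ m = (k : ℂ) • m := by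
  obtain ⟨p, q, a0, a1, b0, b1, c, rfl, ha, hb, rfl⟩ := h
  refine ⟨4 + normSq (conj a0 * b0 + conj a1 * b1), by linarith [normSq_nonneg (conj a0 * b0 + conj a1 * b1)], ?_⟩
  have h1 := spin_sum ha
  have h2 := spin_sum hb
  rw [TS_mk, Tpair_spin ha hb]
  push_cast
  rw [normSq_eq_conj_mul_self]
  simp only [symv, map_add, map_mul, conj_conj, Prod.smul_mk, smul_eq_mul]
  have key : conj a0 * (c * (2 * a0 * b0)) * conj b0 + conj a0 * (c * (a0 * b1 + a1 * b0)) * conj b1 +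
            conj a1 * (c * (a0 * b1 + a1 * b0)) * conj b0 +
          conj a1 * (c * (2 * a1 * b1)) * conj b1 = (4 + (a0 * conj b0 + a1 * conj b1) * (conj a0 * b0 + conj a1 * b1)) * c := by
    linear_combination c * (b0 * conj b0 + b1 * conj b1) * h1 + c * 2 * h2
  rw [key]
  simp only [Prod.mk.injEq]
  refine ⟨by ring, by ring, by ring⟩

abbrev Dsk : Type := Metric.closedBall (0 : ℂ) 1

lemma Dsk_norm (w : Dsk) : ‖(w : ℂ)‖ ≤ 1 := mem_closedBall_zero_iff.1 w.2

instance : CompactSpace Dsk := isCompact_iff_compactSpace.1 (isCompact_closedBall _ _)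

def oneD : Dsk := ⟨1, by simp⟩

lemma qprop (w : Dsk) : !₂[2 * Real.sqrt (1 - ‖(w : ℂ)‖ ^ 2) * (w : ℂ).re,
    -(2 * Real.sqrt (1 - ‖(w : ℂ)‖ ^ 2) * (w : ℂ).im), 2 * ‖(w : ℂ)‖ ^ 2 - 1] ∈
      Metric.sphere (0 : EuclideanSpace ℝ (Fin 3)) 1 := by
  rw [mem_sphere_zero_iff_norm, EuclideanSpace.norm_eq, Real.sqrt_eq_one]
  have h : 0 ≤ 1 - ‖(w : ℂ)‖ ^ 2 := by nlinarith [Dsk_norm w, norm_nonneg (w : ℂ)]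
  have h2 := Real.sq_sqrt h
  have h3 : ‖(w : ℂ)‖ ^ 2 = (w : ℂ).re ^ 2 + (w : ℂ).im ^ 2 := by
    rw [← normSq_eq_norm_sq, normSq_apply]; ring
  simp only [Fin.sum_univ_three, Real.norm_eq_abs, sq_abs]
  simp
  generalize Real.sqrt (1 - ‖(w : ℂ)‖ ^ 2) = r at *
  rw [h3] at *
  linear_combination 4 * ((w : ℂ).re ^ 2 + (w : ℂ).im ^ 2) * h2

noncomputable def q : C(Dsk, S2) where
  toFun w := ⟨_, qprop w⟩
  continuous_toFun := by
    refine Continuous.subtype_mk ?_ _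
    refine (PiLp.continuous_toLp 2 _).comp ?_
    refine continuous_pi fun i => ?_
    have h1 : Continuous fun w : Dsk => (w : ℂ).re := continuous_re.comp continuous_subtype_val
    have h2 : Continuous fun w : Dsk => (w : ℂ).im := continuous_im.comp continuous_subtype_val
    fin_cases i <;> simp <;> fun_prop

lemma q_boundary (w : Dsk) (hw : ‖(w : ℂ)‖ = 1) : q w = q oneD := by
  apply Subtype.ext
  show WithLp.toLp 2 _ = WithLp.toLp 2 _
  simp [hw, oneD]

lemma spin_q (w : Dsk) : Spin (q w) (Real.sqrt 2 * w)
    (Real.sqrt 2 * Real.sqrt (1 - ‖(w : ℂ)‖ ^ 2)) := by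
  have h : 0 ≤ 1 - ‖(w : ℂ)‖ ^ 2 := by nlinarith [Dsk_norm w, norm_nonneg (w : ℂ)]
  have h2 : ((Real.sqrt (1 - ‖(w : ℂ)‖ ^ 2) : ℝ) : ℂ) ^ 2 = 1 - (‖(w : ℂ)‖ : ℂ) ^ 2 := by
    exact_mod_cast Real.sq_sqrt h
  have h3 : ((Real.sqrt 2 : ℝ) : ℂ) ^ 2 = 2 := by
    exact_mod_cast Real.sq_sqrt (by norm_num : (0 : ℝ) ≤ 2)
  have h4 : (w : ℂ) * conj (w : ℂ) = (‖(w : ℂ)‖ : ℂ) ^ 2 := mul_conj' _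
  have h5 : conj (w : ℂ) = (w : ℂ).re - (w : ℂ).im * I := by
    apply Complex.ext <;> simp
  have c0 : (q w).1 0 = 2 * Real.sqrt (1 - ‖(w : ℂ)‖ ^ 2) * (w : ℂ).re := rfl
  have c1 : (q w).1 1 = -(2 * Real.sqrt (1 - ‖(w : ℂ)‖ ^ 2) * (w : ℂ).im) := rfl
  have c2 : (q w).1 2 = 2 * ‖(w : ℂ)‖ ^ 2 - 1 := rfl
  unfold Spin
  rw [c0, c1, c2]
  simp only [map_mul, conj_ofReal]
  push_cast
  generalize ((Real.sqrt (1 - ‖(w : ℂ)‖ ^ 2) : ℝ) : ℂ) = r at *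
  generalize ((Real.sqrt 2 : ℝ) : ℂ) = s at *
  refine ⟨?_, ?_, ?_⟩
  · linear_combination w * conj (w : ℂ) * h3 + 2 * h4
  · rw [h5]; linear_combination r * ((w : ℂ).re - (w : ℂ).im * I) * h3
  · linear_combination r ^ 2 * h3 + 2 * h2

/-- The maps of degree one. -/
def TypeOne (f : S2 → Sym2 S2) : Prop :=
  ∃ m : C(Dsk, ℂ × ℂ × ℂ), (∀ w, m w ≠ 0) ∧ (∀ w, InL (f (q w)) (m w)) ∧
    ∀ w : Dsk, ‖(w : ℂ)‖ = 1 → m w = (w : ℂ) • m oneD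

lemma typeOne_line (x₀ : S2) : TypeOne (fun x => s(x, x₀)) := by
  obtain ⟨b0, b1, hb⟩ := exists_spin x₀
  refine ⟨⟨fun w => symv 1 (Real.sqrt 2 * w) (Real.sqrt 2 * Real.sqrt (1 - ‖(w : ℂ)‖ ^ 2)) b0 b1,
    ?_⟩, ?_, ?_, ?_⟩
  · unfold symv; fun_prop
  · intro w hw
    have hw : symv 1 (Real.sqrt 2 * w) (Real.sqrt 2 * Real.sqrt (1 - ‖(w : ℂ)‖ ^ 2)) b0 b1 = 0 := hw
    have hs := spin_sum (spin_q w)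
    have ht := spin_sum hb
    generalize ((Real.sqrt 2 * w : ℂ)) = a0 at *
    generalize ((Real.sqrt 2 * Real.sqrt (1 - ‖(w : ℂ)‖ ^ 2) : ℂ)) = a1 at *
    simp only [symv, Prod.mk_eq_zero, one_mul, mul_eq_zero, two_ne_zero, false_or] at hw
    obtain ⟨h1, h2, h3⟩ := hw
    have hb0 : b0 = 0 ∨ b0 ≠ 0 := em _
    rcases h1 with h | h <;> rcases h3 with h' | h' <;> simp [h, h'] at hs ht h2 <;>
      rcases h2 with h2 | h2 <;> simp [h2] at hs ht
  · intro w
    exact ⟨q w, x₀, _, _, b0, b1, 1, rfl, spin_q w, hb, rfl⟩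
  · intro w hw
    simp [symv, hw, oneD]
    refine ⟨by ring, by ring⟩

lemma typeOne_step {f g : S2 → Sym2 S2} (h : ∀ w, dist (TS (f (q w))) (TS (g (q w))) < 1)
    (hf : TypeOne f) (hg : Continuous fun w => TS (g (q w))) : TypeOne g := by
  obtain ⟨m, h0, h1, h2⟩ := hf
  refine ⟨⟨fun w => TS (g (q w)) (m w), hg.clm_apply m.continuous⟩, ?_, ?_, ?_⟩
  · intro w hw
    have hw : TS (g (q w)) (m w) = 0 := hw
    obtain ⟨k, hk, e⟩ := TS_of_mem (h1 w)
    have hd := h w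
    rw [dist_eq_norm] at hd
    have h3 := (TS (f (q w)) - TS (g (q w))).le_opNorm (m w)
    rw [_root_.sub_apply, hw, e, sub_zero, norm_smul, norm_real,
      Real.norm_of_nonneg (by linarith)] at h3
    have : 0 < ‖m w‖ := norm_pos_iff.2 (h0 w)
    nlinarith
  · intro w; exact TS_mem _ _
  · intro w hw
    show TS (g (q w)) (m w) = (w : ℂ) • TS (g (q oneD)) (m oneD)
    rw [h2 w hw, q_boundary w hw, map_smul]

lemma transfer (G : unitInterval → Prop)
    (h : ∀ t, ∀ᶠ t' in 𝓝 t, (G t ↔ G t')) : G 0 → G 1 := by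
  have hl : IsLocallyConstant G := by
    rw [IsLocallyConstant.iff_eventually_eq]
    intro t
    filter_upwards [h t] with t' ht'
    exact propext ht'.symm
  intro h0
  rwa [hl.apply_eq_of_isPreconnected isPreconnected_univ (Set.mem_univ 1) (Set.mem_univ 0)]

lemma unif_near {E : Type*} [MetricSpace E] (F : unitInterval × Dsk → E) (hF : Continuous F)
    (ε : ℝ) (hε : 0 < ε) (t : unitInterval) :
    ∀ᶠ t' in 𝓝 t, ∀ w, dist (F (t', w)) (F (t, w)) < ε := by
  let K : C(unitInterval × Dsk, E) := ⟨F, hF⟩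
  have hK := K.curry.continuous
  have := Metric.tendsto_nhds.1 (hK.tendsto t) ε hε
  filter_upwards [this] with t' ht'
  rw [ContinuousMap.dist_lt_iff hε] at ht'
  exact ht'

lemma typeOne_homotopic {f g : C(S2, Sym2 S2)} (h : f.Homotopic g) (hf : TypeOne f) :
    TypeOne g := by
  obtain ⟨H⟩ := h
  have hK : Continuous fun x : unitInterval × Dsk => TS (H (x.1, q x.2)) :=
    continuous_TS.comp (H.continuous.comp (by fun_prop))
  have hc : ∀ t, Continuous fun w => TS (H (t, q w)) := fun t =>
    hK.comp (Continuous.prodMk_right t)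
  have := transfer (fun t => TypeOne (fun x => H (t, x))) ?_ ?_
  · simpa using this
  · intro t
    filter_upwards [unif_near _ hK 1 one_pos t] with t' ht'
    constructor
    · intro h; exact typeOne_step (f := fun x => H (t, x)) (g := fun x => H (t', x))
        (fun w => by rw [dist_comm]; exact ht' w) h (hc t')
    · intro h; exact typeOne_step (f := fun x => H (t', x)) (g := fun x => H (t, x))
        (fun w => ht' w) h (hc t)
  · simpa using hf

/-- square root on the disc -/
def HasSqrt (m : C(Dsk, ℂ × ℂ × ℂ)) : Prop :=
  ∃ l0 l1 : C(Dsk, ℂ), ∀ w, l0 w ^ 2 = (m w).1 ∧ l0 w * l1 w = (m w).2.1 ∧ l1 w ^ 2 = (m w).2.2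

lemma hasSqrt_step (m m' : C(Dsk, ℂ × ℂ × ℂ)) (ε : ℝ)
    (hm : ∀ w, ε ≤ ‖(m w).1‖ + ‖(m w).2.2‖) (hm' : ∀ w, (m' w).2.1 ^ 2 = (m' w).1 * (m' w).2.2)
    (hε : 0 < ε) (hd : ∀ w, dist (m w) (m' w) < ε / 4) (h : HasSqrt m) : HasSqrt m' := by
  obtain ⟨l0, l1, hl⟩ := h
  let N : Dsk → ℂ := fun w => conj (l0 w) ^ 2 * (m' w).1 + 2 * conj (l0 w) * conj (l1 w) * (m' w).2.1
    + conj (l1 w) ^ 2 * (m' w).2.2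
  have hcc : Continuous (fun z : ℂ => conj z) := continuous_conj
  have hN : Continuous N := by fun_prop
  have hpos : ∀ w, 0 < (N w).re := by
    intro w
    obtain ⟨e0, e1, e2⟩ := hl w
    have hmw := hm w
    have hdw := hd w
    rw [dist_eq_norm] at hdw
    have n0 := (norm_fst_le (m w - m' w)).trans_lt hdw
    have n1 := ((norm_fst_le (m w - m' w).2).trans (norm_snd_le (m w - m' w))).trans_lt hdw
    have n2 := ((norm_snd_le (m w - m' w).2).trans (norm_snd_le (m w - m' w))).trans_lt hdw
    simp only [Prod.fst_sub, Prod.snd_sub] at n0 n1 n2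
    rw [← e0, ← e2, norm_pow, norm_pow] at hmw
    rw [← e0] at n0
    rw [← e1] at n1
    rw [← e2] at n2
    obtain ⟨A, hA⟩ : ∃ A, A = ‖l0 w‖ := ⟨_, rfl⟩
    obtain ⟨B, hB⟩ : ∃ B, B = ‖l1 w‖ := ⟨_, rfl⟩
    have key : ((((A ^ 2 + B ^ 2) ^ 2 : ℝ) : ℂ) - N w) =
        conj (l0 w) ^ 2 * (l0 w ^ 2 - (m' w).1) + 2 * conj (l0 w) * conj (l1 w) *
          (l0 w * l1 w - (m' w).2.1) + conj (l1 w) ^ 2 * (l1 w ^ 2 - (m' w).2.2) := by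
      have a1 : (A : ℂ) ^ 2 = l0 w * conj (l0 w) := by rw [hA, mul_conj']
      have b1 : (B : ℂ) ^ 2 = l1 w * conj (l1 w) := by rw [hB, mul_conj']
      push_cast
      rw [a1, b1]
      simp only [N]
      ring
    have hle : ‖((((A ^ 2 + B ^ 2) ^ 2 : ℝ) : ℂ) - N w)‖ ≤
        A ^ 2 * (ε / 4) + 2 * A * B * (ε / 4) + B ^ 2 * (ε / 4) := by
      rw [key]
      refine (norm_add_le _ _).trans (add_le_add ((norm_add_le _ _).trans (add_le_add ?_ ?_)) ?_)
      · rw [norm_mul, norm_pow, RCLike.norm_conj, ← hA]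
        gcongr
      · rw [norm_mul, norm_mul, norm_mul, RCLike.norm_conj, RCLike.norm_conj, ← hA, ← hB]
        simp only [Complex.norm_ofNat]
        have : 0 ≤ A := hA ▸ norm_nonneg _
        have : 0 ≤ B := hB ▸ norm_nonneg _
        gcongr
      · rw [norm_mul, norm_pow, RCLike.norm_conj, ← hB]
        gcongr
    have hre := (re_le_norm _).trans hle
    rw [sub_re, ofReal_re] at hre
    rw [← hA, ← hB] at hmw
    by_contra hcon
    push Not at hcon
    have hS : 0 < A ^ 2 + B ^ 2 := by linarith
    have h2 : (A ^ 2 + B ^ 2) ^ 2 ≤ (A ^ 2 + B ^ 2) * (ε / 2) := by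
      nlinarith [sq_nonneg (A - B), mul_nonneg (sq_nonneg (A - B)) hε.le]
    nlinarith
  have hslit : ∀ w, N w ∈ slitPlane := fun w => Or.inl (hpos w)
  let S : Dsk → ℂ := fun w => N w ^ ((2 : ℂ)⁻¹)
  have hS : Continuous S := hN.cpow continuous_const hslit
  have hS2 : ∀ w, S w ^ 2 = N w := fun w => by
    exact Complex.cpow_ofNat_inv_pow (N w) 2
  have hS0 : ∀ w, S w ≠ 0 := fun w h => by
    have := hS2 w
    rw [h] at this
    exact slitPlane_ne_zero (hslit w) (by rw [← this]; simp)
  refine ⟨⟨fun w => ((m' w).1 * conj (l0 w) + (m' w).2.1 * conj (l1 w)) / S w, ?_⟩,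
    ⟨fun w => ((m' w).2.1 * conj (l0 w) + (m' w).2.2 * conj (l1 w)) / S w, ?_⟩, ?_⟩
  · exact Continuous.div (by fun_prop) hS hS0
  · exact Continuous.div (by fun_prop) hS hS0
  · intro w
    have h1 := hm' w
    have h2 := hS2 w
    have h0 := hS0 w
    simp only [ContinuousMap.coe_mk]
    refine ⟨?_, ?_, ?_⟩
    · field_simp
      rw [h2]; simp only [N]
      linear_combination conj (l1 w) ^ 2 * h1
    · field_simp
      rw [h2]; simp only [N]
      linear_combination -conj (l0 w) * conj (l1 w) * h1
    · field_simp
      rw [h2]; simp only [N]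
      linear_combination conj (l0 w) ^ 2 * h1

def scl : C(unitInterval × Dsk, Dsk) where
  toFun x := ⟨((x.1 : ℝ) : ℂ) * x.2, by
    have h1 := Dsk_norm x.2
    have h2 := x.1.2.1
    have h3 := x.1.2.2
    simp only [mem_closedBall_zero_iff, norm_mul, norm_real, Real.norm_of_nonneg h2]
    nlinarith [norm_nonneg (x.2 : ℂ)]⟩
  continuous_toFun := by fun_prop

lemma hasSqrt_all (m : C(Dsk, ℂ × ℂ × ℂ)) (h0 : ∀ w, m w ≠ 0)
    (hm : ∀ w, (m w).2.1 ^ 2 = (m w).1 * (m w).2.2) : HasSqrt m := by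
  have hpos : ∀ w, 0 < ‖(m w).1‖ + ‖(m w).2.2‖ := by
    intro w
    by_contra hcon
    have a1 := norm_nonneg (m w).1
    have a2 := norm_nonneg (m w).2.2
    have b1 : (m w).1 = 0 := norm_eq_zero.1 (by linarith)
    have b2 : (m w).2.2 = 0 := norm_eq_zero.1 (by linarith)
    have b3 : (m w).2.1 = 0 := by
      have := hm w
      rw [b1, zero_mul] at this
      exact pow_eq_zero_iff two_ne_zero |>.1 this
    exact h0 w (Prod.ext b1 (Prod.ext b3 b2))
  obtain ⟨w0, -, hw0⟩ := isCompact_univ.exists_isMinOn (s := (Set.univ : Set Dsk)) ⟨oneD, trivial⟩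
    (f := fun w => ‖(m w).1‖ + ‖(m w).2.2‖) (by fun_prop)
  obtain ⟨ε, hε⟩ : ∃ ε, ε = ‖(m w0).1‖ + ‖(m w0).2.2‖ := ⟨_, rfl⟩
  have hmin : ∀ w, ε ≤ ‖(m w).1‖ + ‖(m w).2.2‖ := fun w => hε ▸ hw0 (Set.mem_univ w)
  have hε0 : 0 < ε := hε ▸ hpos w0
  have hK := (m.comp scl).curry.continuous
  have := transfer (fun t => HasSqrt ((m.comp scl).curry t)) ?_ ?_
  · have e : (m.comp scl).curry 1 = m := by
      ext1 w
      show m (scl (1, w)) = m w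
      congr 1
      apply Subtype.ext
      simp [scl]
    simpa only [e] using this
  · intro t
    have := Metric.tendsto_nhds.1 (hK.tendsto t) (ε / 4) (by positivity)
    filter_upwards [this] with t' ht'
    rw [ContinuousMap.dist_lt_iff (by positivity)] at ht'
    constructor
    · intro h
      exact hasSqrt_step ((m.comp scl).curry t) _ ε (fun w => hmin _) (fun w => hm _) hε0
        (fun w => by rw [dist_comm]; exact ht' w) h
    · intro h
      exact hasSqrt_step ((m.comp scl).curry t') _ ε (fun w => hmin _) (fun w => hm _) hε0 (fun w => ht' w) h
  · have hz : ∀ w, (m.comp scl).curry 0 w = m ⟨0, by simp⟩ := by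
      intro w
      show m (scl (0, w)) = m _
      congr 1
      apply Subtype.ext
      simp [scl]
    obtain ⟨l0, hl0⟩ := IsAlgClosed.exists_pow_nat_eq (m ⟨0, by simp⟩).1 (n := 2) (by norm_num)
    obtain ⟨l1, hl1⟩ := IsAlgClosed.exists_pow_nat_eq (m ⟨0, by simp⟩).2.2 (n := 2) (by norm_num)
    have h3 := hm ⟨0, by simp⟩
    rw [← hl0, ← hl1, ← mul_pow] at h3
    rcases sq_eq_sq_iff_eq_or_eq_neg.1 h3 with h | h
    · refine ⟨ContinuousMap.const _ l0, ContinuousMap.const _ l1, fun w => ?_⟩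
      rw [hz]
      exact ⟨hl0, h.symm, hl1⟩
    · refine ⟨ContinuousMap.const _ l0, ContinuousMap.const _ (-l1), fun w => ?_⟩
      rw [hz]
      refine ⟨hl0, by simp [h], by simp [hl1]⟩

noncomputable def bdry (θ : ℝ) : Dsk := ⟨exp (θ * I), by simp⟩

lemma continuous_bdry : Continuous bdry := by unfold bdry; fun_prop

lemma no_odd (l : C(Dsk, ℂ)) (h1 : l oneD ≠ 0)
    (h : ∀ w : Dsk, ‖(w : ℂ)‖ = 1 → l w ^ 2 = w * l oneD ^ 2) : False := by
  have hb0 : bdry 0 = oneD := by apply Subtype.ext; simp [bdry, oneD]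
  have hb1 : bdry (2 * Real.pi) = oneD := by apply Subtype.ext; simp [bdry, oneD]
  have := isPreconnected_univ.eq_of_sq_eq (S := (Set.univ : Set ℝ)) (f := fun θ => l (bdry θ))
    (g := fun θ : ℝ => exp (θ / 2 * I) * l oneD)
    (l.continuous.comp continuous_bdry).continuousOn (by fun_prop) ?_ ?_ (Set.mem_univ 0)
    (by simp [hb0])
  · have h2 := this (Set.mem_univ (2 * Real.pi))
    have e : ((2 * Real.pi : ℝ) : ℂ) / 2 * I = Real.pi * I := by push_cast; ring
    simp only [hb1, e, exp_pi_mul_I] at h2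
    apply h1
    linear_combination h2 / 2
  · intro θ _
    have := h (bdry θ) (by simp [bdry])
    simp only [Pi.pow_apply]
    rw [this, mul_pow, ← exp_nat_mul]
    congr 1
    show exp _ = _
    congr 1
    push_cast; ring
  · intro θ _
    exact mul_ne_zero (exp_ne_zero _) h1

lemma inL_diag {p : S2} {m : ℂ × ℂ × ℂ} (h : InL s(p, p) m) : m.2.1 ^ 2 = m.1 * m.2.2 := by
  obtain ⟨p', q', a0, a1, b0, b1, c, e, ha, hb, rfl⟩ := h
  have e' : p' = p ∧ q' = p := by
    rcases Sym2.eq_iff.1 e with h | h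
    · exact ⟨h.1.symm, h.2.symm⟩
    · exact ⟨h.2.symm, h.1.symm⟩
  rw [e'.1] at ha
  rw [e'.2] at hb
  have hs := spin_sum ha
  obtain ⟨x1, x2, x3⟩ := ha
  obtain ⟨y1, y2, y3⟩ := hb
  rw [← y1] at x1
  rw [← y2] at x2
  rw [← y3] at x3
  have x4 := congrArg conj x2
  simp only [map_mul, conj_conj] at x4
  have k : a0 * b1 - a1 * b0 = 0 := by
    have k0 : (a0 * b1 - a1 * b0) * conj a0 = 0 := by linear_combination b1 * x1 - b0 * x2
    have k1 : (a0 * b1 - a1 * b0) * conj a1 = 0 := by linear_combination b1 * x4 - b0 * x3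
    linear_combination (a0 * k0 + a1 * k1 - (a0 * b1 - a1 * b0) * hs) / 2
  simp only [symv]
  linear_combination c ^ 2 * (a0 * b1 - a1 * b0) * k

lemma not_typeOne_diag (φ : S2 → S2) : ¬ TypeOne (fun x => s(φ x, φ x)) := by
  rintro ⟨m, h0, h1, h2⟩
  obtain ⟨l0, l1, hl⟩ := hasSqrt_all m h0 (fun w => inL_diag (h1 w))
  by_cases h : l0 oneD = 0
  · by_cases h' : l1 oneD = 0
    · obtain ⟨e0, e1, e2⟩ := hl oneD
      apply h0 oneD
      refine Prod.ext ?_ (Prod.ext ?_ ?_)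
      · rw [← e0, h]; simp
      · rw [← e1, h]; simp
      · rw [← e2, h']; simp
    · refine no_odd l1 h' fun w hw => ?_
      rw [(hl w).2.2, (hl oneD).2.2, h2 w hw]; rfl
  · refine no_odd l0 h fun w hw => ?_
    rw [(hl w).1, (hl oneD).1, h2 w hw]; rfl

lemma sphere_homotopic (f g : C(S2, S2)) (h : ∀ x, f x ≠ -g x) : f.Homotopic g := by
  let v : unitInterval × S2 → EuclideanSpace ℝ (Fin 3) :=
    fun x => (1 - (x.1 : ℝ)) • (f x.2).1 + (x.1 : ℝ) • (g x.2).1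
  have hn : ∀ x : S2, ‖x.1‖ = 1 := fun x => mem_sphere_zero_iff_norm.1 x.2
  have hv : Continuous v := by fun_prop
  have hv0 : ∀ x, v x ≠ 0 := by
    rintro ⟨t, x⟩ h0
    have h0 : (1 - (t : ℝ)) • (f x).1 + (t : ℝ) • (g x).1 = 0 := h0
    have h1 := eq_neg_of_add_eq_zero_left h0
    have h2 := congrArg norm h1
    rw [norm_neg, norm_smul, norm_smul, hn, hn, Real.norm_of_nonneg (by linarith [t.2.2]),
      Real.norm_of_nonneg t.2.1] at h2
    have h3 : (t : ℝ) = 1 / 2 := by linarith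
    rw [h3] at h1
    apply h x
    apply Subtype.ext
    have h4 : (1 / 2 : ℝ) • (f x).1 = (1 / 2 : ℝ) • (-(g x).1) := by
      rw [smul_neg, ← h1]; norm_num
    exact smul_right_injective _ (by norm_num : (1 / 2 : ℝ) ≠ 0) h4
  refine ⟨⟨⟨fun x => ⟨‖v x‖⁻¹ • v x, ?_⟩, ?_⟩, ?_, ?_⟩⟩
  · rw [mem_sphere_zero_iff_norm, norm_smul, norm_inv, norm_norm,
      inv_mul_cancel₀ (norm_ne_zero_iff.2 (hv0 x))]
  · exact Continuous.subtype_mk ((hv.norm.inv₀ fun x => norm_ne_zero_iff.2 (hv0 x)).smul hv) _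
  · intro x
    apply Subtype.ext
    simp [v, hn]
  · intro x
    apply Subtype.ext
    simp [v, hn]

end Helpers

/-- If `Ψ : S² → S²` is a continuous map without fixed points and `φ₁, φ₂ : S² → S²` are
continuous maps with `x ↦ ⟦(φ₁ x, φ₂ x)⟧` homotopic to `Φ₀ : x ↦ ⟦(x, x₀)⟧`, then
`φ₂(x) = Ψ(φ₁(x))` for some `x`. -/
theorem stmt_11 (x₀ : S2) (Φ₀ : C(S2, Sym2 S2)) (hΦ₀ : ∀ x, Φ₀ x = s(x, x₀))
    (Ψ : C(S2, S2)) (hΨ : ∀ p, Ψ p ≠ p)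
    (φ₁ φ₂ : C(S2, S2)) (Φ : C(S2, Sym2 S2)) (hΦ : ∀ x, Φ x = s(φ₁ x, φ₂ x))
    (hhom : Φ.Homotopic Φ₀) : ∃ x : S2, φ₂ x = Ψ (φ₁ x) := by
  by_contra hcon
  push Not at hcon
  let ng : C(S2, S2) := ⟨fun x => -x, continuous_neg⟩
  have h1 : φ₂.Homotopic (ng.comp (Ψ.comp φ₁)) := sphere_homotopic _ _ fun x => by
    simpa [ng] using hcon x
  have h2 : (ng.comp (Ψ.comp φ₁)).Homotopic φ₁ := sphere_homotopic _ _ fun x => by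
    simpa [ng] using hΨ (φ₁ x)
  have h3 : φ₂.Homotopic φ₁ := h1.trans h2
  let mk : C(S2 × S2, Sym2 S2) := ⟨fun x => s(x.1, x.2), continuous_mkSym⟩
  have h4 : (mk.comp (φ₁.prodMk φ₂)).Homotopic (mk.comp (φ₁.prodMk φ₁)) :=
    (ContinuousMap.Homotopic.refl mk).comp ((ContinuousMap.Homotopic.refl φ₁).prodMk h3)
  have h5 : mk.comp (φ₁.prodMk φ₂) = Φ := by
    ext1 x; exact (hΦ x).symm
  rw [h5] at h4
  have h6 : TypeOne Φ₀ := by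
    have : (Φ₀ : S2 → Sym2 S2) = fun x => s(x, x₀) := funext hΦ₀
    rw [this]; exact typeOne_line x₀
  exact not_typeOne_diag φ₁ (typeOne_homotopic (hhom.symm.trans h4) h6)
end
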